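/- arXiv:2510.06493 — 2 statements merged into one kernel-verified Lean document; each statement's English description precedes it below -/
import Mathlib

section
/- For every n ≥ 2, the pattern counts of the Sierpiński triangle satisfy B_{2n} + 6 = A_n + 2·C_{n+1} + B_{n+1} and B_{2n+1} + 6 = A_{n+1} + 2·B_{n+1} + D_{n+2}. -/
/-- Whether the unit triangle at row `r`, column `c` of the Sierpiński triangle is filled:
upward units `(r, 2j)` are filled iff `choose r j` is odd; downward units are unfilled. -/
def filled (r c : ℕ) : Bool :=
  decide (c % 2 = 0 ∧ Nat.choose r (c / 2) % 2 = 1)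

/-- The upward pattern of size `n` at upward position `(r, c)`. -/
def upPattern (n r c : ℕ) : ℕ × ℕ → Bool := fun q =>
  if q.1 < n ∧ q.2 ≤ 2 * q.1 then filled (r + q.1) (c + q.2) else false

/-- The set of all upward patterns of size `n` occurring in the Sierpiński triangle. -/
def Pup (n : ℕ) : Set (ℕ × ℕ → Bool) :=
  { p | ∃ r c : ℕ, c % 2 = 0 ∧ c ≤ 2 * r ∧ p = upPattern n r c }

/-- The downward pattern of size `n` at downward position `(r, c)`. -/
def downPattern (n r c : ℕ) : ℕ × ℕ → Bool := fun q =>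
  if q.1 < n ∧ q.2 ≤ 2 * (n - 1 - q.1) then filled (r + q.1) (c + 2 * q.1 + q.2) else false

/-- The set of all downward patterns of size `n` occurring in the Sierpiński triangle. -/
def Pdown (n : ℕ) : Set (ℕ × ℕ → Bool) :=
  { p | ∃ r c : ℕ, c % 2 = 1 ∧ c + 2 * (n - 1) ≤ 2 * r ∧ p = downPattern n r c }

/-- The top-cut pattern of size `n` at upward position `(r, c)` (apex unit removed). -/
def topCutPattern (n r c : ℕ) : ℕ × ℕ → Bool := fun q =>
  if 1 ≤ q.1 ∧ q.1 < n ∧ q.2 ≤ 2 * q.1 then filled (r + q.1) (c + q.2) else false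

/-- The set of all top-cut patterns of size `n` occurring in the Sierpiński triangle. -/
def PtopCut (n : ℕ) : Set (ℕ × ℕ → Bool) :=
  { p | ∃ r c : ℕ, c % 2 = 0 ∧ c ≤ 2 * r ∧ p = topCutPattern n r c }

/-- The bottom-cut pattern of size `n` at upward position `(r, c)`
(both bottom corner units removed). -/
def botCutPattern (n r c : ℕ) : ℕ × ℕ → Bool := fun q =>
  if (q.1 < n ∧ q.2 ≤ 2 * q.1) ∧ ¬(q.1 = n - 1 ∧ (q.2 = 0 ∨ q.2 = 2 * (n - 1)))
  then filled (r + q.1) (c + q.2) else false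

/-- The set of all bottom-cut patterns of size `n` occurring in the Sierpiński triangle. -/
def PbotCut (n : ℕ) : Set (ℕ × ℕ → Bool) :=
  { p | ∃ r c : ℕ, c % 2 = 0 ∧ c ≤ 2 * r ∧ p = botCutPattern n r c }

/-- The fully-cut pattern of size `n` at upward position `(r, c)`
(all three corner units removed). -/
def fullyCutPattern (n r c : ℕ) : ℕ × ℕ → Bool := fun q =>
  if (q.1 < n ∧ q.2 ≤ 2 * q.1) ∧ q ≠ (0, 0) ∧ ¬(q.1 = n - 1 ∧ (q.2 = 0 ∨ q.2 = 2 * (n - 1)))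
  then filled (r + q.1) (c + q.2) else false

/-- The set of all fully-cut patterns of size `n` occurring in the Sierpiński triangle. -/
def PfullyCut (n : ℕ) : Set (ℕ × ℕ → Bool) :=
  { p | ∃ r c : ℕ, c % 2 = 0 ∧ c ≤ 2 * r ∧ p = fullyCutPattern n r c }

/-- Upward patterns of size `m` occurring inside the approximation `T_N`
(rows `0, …, 2^N - 1`). -/
def PupN (N m : ℕ) : Set (ℕ × ℕ → Bool) :=
  { p | ∃ r c : ℕ, c % 2 = 0 ∧ c ≤ 2 * r ∧ r + m ≤ 2 ^ N ∧ p = upPattern m r c }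

/-- Upward patterns of size `n` at positions with `r ≡ ρ [MOD 2]` and `c ≡ γ [MOD 4]`. -/
def PupRC (n ρ γ : ℕ) : Set (ℕ × ℕ → Bool) :=
  { p | ∃ r c : ℕ, c % 2 = 0 ∧ c ≤ 2 * r ∧ r % 2 = ρ ∧ c % 4 = γ ∧ p = upPattern n r c }

/-- Downward patterns of size `n` at positions with `r ≡ ρ [MOD 2]` and `c ≡ γ [MOD 4]`. -/
def PdownRC (n ρ γ : ℕ) : Set (ℕ × ℕ → Bool) :=
  { p | ∃ r c : ℕ, c % 2 = 1 ∧ c + 2 * (n - 1) ≤ 2 * r ∧ r % 2 = ρ ∧ c % 4 = γ ∧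
      p = downPattern n r c }

/-- Top-cut patterns of size `n` at positions with `r ≡ ρ [MOD 2]` and `c ≡ γ [MOD 4]`. -/
def PtopCutRC (n ρ γ : ℕ) : Set (ℕ × ℕ → Bool) :=
  { p | ∃ r c : ℕ, c % 2 = 0 ∧ c ≤ 2 * r ∧ r % 2 = ρ ∧ c % 4 = γ ∧ p = topCutPattern n r c }

/-- Fully-cut patterns of size `n` at positions with `r ≡ ρ [MOD 2]` and `c ≡ γ [MOD 4]`. -/
def PfullyCutRC (n ρ γ : ℕ) : Set (ℕ × ℕ → Bool) :=
  { p | ∃ r c : ℕ, c % 2 = 0 ∧ c ≤ 2 * r ∧ r % 2 = ρ ∧ c % 4 = γ ∧ p = fullyCutPattern n r c }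

/-- The everywhere-unfilled upward pattern. -/
def blankUp : ℕ × ℕ → Bool := fun _ => false

/-- The upward pattern that is filled exactly at the apex `(0, 0)`. -/
def topUp : ℕ × ℕ → Bool := fun q => decide (q = (0, 0))

/-- The size-`N` upward pattern that is filled exactly at the bottom-left corner `(N-1, 0)`. -/
def botleftUp (N : ℕ) : ℕ × ℕ → Bool := fun q => decide (q = (N - 1, 0))

/-- The size-`N` upward pattern filled exactly at the bottom-right corner `(N-1, 2(N-1))`. -/
def botrightUp (N : ℕ) : ℕ × ℕ → Bool := fun q => decide (q = (N - 1, 2 * (N - 1)))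

/-- The everywhere-unfilled downward pattern. -/
def blankDown : ℕ × ℕ → Bool := fun _ => false

/-- The size-`N` downward pattern filled exactly at the upward units along the top side:
positions `(0, m)` with `m` odd, `1 ≤ m ≤ 2N - 3`. -/
def topsideDown (N : ℕ) : ℕ × ℕ → Bool := fun q =>
  decide (q.1 = 0 ∧ q.2 % 2 = 1 ∧ 1 ≤ q.2 ∧ q.2 ≤ 2 * N - 3)

/-- The size-`N` downward pattern filled exactly at the upward units along the left side:
positions `(k, 1)` with `0 ≤ k ≤ N - 2`. -/
def leftsideDown (N : ℕ) : ℕ × ℕ → Bool := fun q =>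
  decide (q.2 = 1 ∧ q.1 ≤ N - 2)

/-- The size-`N` downward pattern filled exactly at the upward units along the right side:
positions `(k, 2(N-1-k) - 1)` with `0 ≤ k ≤ N - 2`. -/
def rightsideDown (N : ℕ) : ℕ × ℕ → Bool := fun q =>
  decide (q.1 ≤ N - 2 ∧ q.2 = 2 * (N - 1 - q.1) - 1)

namespace SierB

/-- Pascal's triangle mod 2. -/
def S (r j : ℕ) : Bool := decide (Nat.choose r j % 2 = 1)

lemma S_lucas (r j : ℕ) :
    Nat.choose r j % 2 = (Nat.choose (r % 2) (j % 2) * Nat.choose (r / 2) (j / 2)) % 2 := by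
  have : Fact (Nat.Prime 2) := ⟨Nat.prime_two⟩
  exact Choose.choose_modEq_choose_mod_mul_choose_div_nat (n := r) (k := j) (p := 2)

lemma S00 (r j : ℕ) : S (2 * r) (2 * j) = S r j := by
  unfold S; rw [S_lucas (2 * r)]; simp

lemma S10 (r j : ℕ) : S (2 * r + 1) (2 * j) = S r j := by
  unfold S; rw [S_lucas (2 * r + 1)]
  have h1 : (2 * r + 1) % 2 = 1 := by omega
  have h2 : (2 * r + 1) / 2 = r := by omega
  simp [h1, h2]

lemma S11 (r j : ℕ) : S (2 * r + 1) (2 * j + 1) = S r j := by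
  unfold S; rw [S_lucas (2 * r + 1)]
  have h1 : (2 * r + 1) % 2 = 1 := by omega
  have h2 : (2 * r + 1) / 2 = r := by omega
  have h3 : (2 * j + 1) % 2 = 1 := by omega
  have h4 : (2 * j + 1) / 2 = j := by omega
  simp [h1, h2, h3, h4]

lemma S01 (r j : ℕ) : S (2 * r) (2 * j + 1) = false := by
  unfold S; rw [S_lucas (2 * r)]
  have h3 : (2 * j + 1) % 2 = 1 := by omega
  simp [h3]

lemma S00' {R J r j : ℕ} (h : R = 2 * r) (h' : J = 2 * j) : S R J = S r j := by
  subst h h'; exact S00 r j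
lemma S10' {R J r j : ℕ} (h : R = 2 * r + 1) (h' : J = 2 * j) : S R J = S r j := by
  subst h h'; exact S10 r j
lemma S11' {R J r j : ℕ} (h : R = 2 * r + 1) (h' : J = 2 * j + 1) : S R J = S r j := by
  subst h h'; exact S11 r j
lemma S01' {R J : ℕ} (h : R % 2 = 0) (h' : J % 2 = 1) : S R J = false := by
  obtain ⟨r, rfl⟩ : ∃ r, R = 2 * r := ⟨R / 2, by omega⟩
  obtain ⟨j, rfl⟩ : ∃ j, J = 2 * j + 1 := ⟨J / 2, by omega⟩
  exact S01 r j

lemma S_big {r j : ℕ} (h : r < j) : S r j = false := by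
  unfold S; simp [Nat.choose_eq_zero_of_lt h]

lemma S_symm {r j : ℕ} (h : j ≤ r) : S r (r - j) = S r j := by
  unfold S; rw [Nat.choose_symm h]

/-- The hole below row `2 ^ M`. -/
lemma S_hole (M : ℕ) : ∀ k c, k < c → c < 2 ^ M → S (2 ^ M + k) c = false := by
  induction M with
  | zero => intro k c h h'; simp at h'; omega
  | succ M ih =>
    intro k c h h'
    have e : 2 ^ (M + 1) = 2 * 2 ^ M := by ring
    rw [e] at h' ⊢
    rcases Nat.mod_two_eq_zero_or_one k with hk | hk <;>
      rcases Nat.mod_two_eq_zero_or_one c with hc | hc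
    · rw [S00' (r := 2 ^ M + k / 2) (j := c / 2) (by omega) (by omega)]
      exact ih _ _ (by omega) (by omega)
    · exact S01' (by omega) (by omega)
    · rw [S10' (r := 2 ^ M + k / 2) (j := c / 2) (by omega) (by omega)]
      exact ih _ _ (by omega) (by omega)
    · rw [S11' (r := 2 ^ M + k / 2) (j := c / 2) (by omega) (by omega)]
      exact ih _ _ (by omega) (by omega)

lemma S_edge (M : ℕ) : ∀ k, k < 2 ^ M → S (2 ^ M + k) (2 ^ M) = true := by
  induction M with
  | zero => intro k h; simp at h; subst h; decide
  | succ M ih =>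
    intro k h
    have e : 2 ^ (M + 1) = 2 * 2 ^ M := by ring
    rw [e] at h ⊢
    rcases Nat.mod_two_eq_zero_or_one k with hk | hk
    · rw [S00' (r := 2 ^ M + k / 2) (j := 2 ^ M) (by omega) (by omega)]
      exact ih _ (by omega)
    · rw [S10' (r := 2 ^ M + k / 2) (j := 2 ^ M) (by omega) (by omega)]
      exact ih _ (by omega)

lemma S_edge' (M k : ℕ) (h : k < 2 ^ M) : S (2 ^ M + k) k = true := by
  rw [← S_symm (by omega : k ≤ 2 ^ M + k), Nat.add_sub_cancel]
  exact S_edge M k h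

lemma S_full (M : ℕ) : ∀ r j, r + 1 = 2 ^ M → j ≤ r → S r j = true := by
  induction M with
  | zero => intro r j h h'; simp at h; subst h; obtain rfl : j = 0 := by omega
            decide
  | succ M ih =>
    intro r j h h'
    have e : 2 ^ (M + 1) = 2 * 2 ^ M := by ring
    rcases Nat.mod_two_eq_zero_or_one j with hc | hc
    · rw [S10' (r := r / 2) (j := j / 2) (by omega) (by omega)]
      exact ih _ _ (by omega) (by omega)
    · rw [S11' (r := r / 2) (j := j / 2) (by omega) (by omega)]
      exact ih _ _ (by omega) (by omega)

/-- Rotation symmetry. -/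
lemma S_rot (M : ℕ) : ∀ r j r' j', j ≤ r → r' + j + 1 = 2 ^ M → j' + j = r → r < 2 ^ M →
    S r' j' = S r j := by
  induction M with
  | zero =>
    intro r j r' j' h1 h2 h3 h4
    simp at h2 h4
    obtain ⟨rfl, rfl⟩ := h2
    subst h4
    obtain rfl : j' = 0 := by omega
    rfl
  | succ M ih =>
    intro r j r' j' h1 h2 h3 h4
    have e : 2 ^ (M + 1) = 2 * 2 ^ M := by ring
    rcases Nat.mod_two_eq_zero_or_one r with hk | hk <;>
      rcases Nat.mod_two_eq_zero_or_one j with hc | hc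
    · rw [S00' (R := r) (r := r / 2) (j := j / 2) (by omega) (by omega),
        S10' (R := r') (r := r' / 2) (j := j' / 2) (by omega) (by omega)]
      exact ih _ _ _ _ (by omega) (by omega) (by omega) (by omega)
    · rw [S01' (R := r) (by omega) (by omega), S01' (by omega) (by omega)]
    · rw [S10' (R := r) (r := r / 2) (j := j / 2) (by omega) (by omega),
        S11' (R := r') (r := r' / 2) (j := j' / 2) (by omega) (by omega)]
      exact ih _ _ _ _ (by omega) (by omega) (by omega) (by omega)
    · rw [S11' (R := r) (r := r / 2) (j := j / 2) (by omega) (by omega),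
        S00' (R := r') (r := r' / 2) (j := j' / 2) (by omega) (by omega)]
      exact ih _ _ _ _ (by omega) (by omega) (by omega) (by omega)

/-- Filled cells in the window with mask `V` at position `x`. -/
def pat (V : ℕ → ℕ → Prop) (x : ℕ × ℕ) : Set (ℕ × ℕ) :=
  {q | V q.1 q.2 ∧ S (x.1 + q.1) (x.2 + q.2) = true}

def Same (V : ℕ → ℕ → Prop) (x y : ℕ × ℕ) : Prop :=
  ∀ k i, V k i → S (x.1 + k) (x.2 + i) = S (y.1 + k) (y.2 + i)

def tri : Set (ℕ × ℕ) := {p | p.2 ≤ p.1}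

def cls (ε δ : ℕ) : Set (ℕ × ℕ) := {p | p.2 ≤ p.1 ∧ p.1 % 2 = ε ∧ p.2 % 2 = δ}

lemma pat_eq_iff (V : ℕ → ℕ → Prop) (x y : ℕ × ℕ) : pat V x = pat V y ↔ Same V x y := by
  constructor
  · intro h k i hv
    have := Set.ext_iff.1 h (k, i)
    simp only [pat, Set.mem_ofPred_eq, hv, true_and] at this
    exact Bool.eq_iff_iff.2 this
  · intro h
    ext ⟨k, i⟩
    simp only [pat, Set.mem_ofPred_eq]
    constructor
    · rintro ⟨a, b⟩; exact ⟨a, by rw [← h k i a]; exact b⟩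
    · rintro ⟨a, b⟩; exact ⟨a, by rw [h k i a]; exact b⟩

lemma ncard_image_congr {α β γ : Type*} (X : Set α) (f : α → β) (g : α → γ)
    (h : ∀ x ∈ X, ∀ y ∈ X, (f x = f y ↔ g x = g y)) : (f '' X).ncard = (g '' X).ncard := by
  refine Set.ncard_congr (fun b hb => g hb.choose) ?_ ?_ ?_
  · intro b hb; exact ⟨_, hb.choose_spec.1, rfl⟩
  · intro a b ha hb e
    have := (h _ ha.choose_spec.1 _ hb.choose_spec.1).2 e
    rw [ha.choose_spec.2, hb.choose_spec.2] at this
    exact this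
  · rintro _ ⟨x, hx, rfl⟩
    have hb : f x ∈ f '' X := ⟨x, hx, rfl⟩
    exact ⟨f x, hb, (h _ hb.choose_spec.1 _ hx).1 hb.choose_spec.2⟩

lemma cnt_congr {V W : ℕ → ℕ → Prop} {X Y : Set (ℕ × ℕ)} (h : ℕ × ℕ → ℕ × ℕ)
    (hXY : h '' X = Y)
    (hs : ∀ x ∈ X, ∀ y ∈ X, (Same V x y ↔ Same W (h x) (h y))) :
    (pat V '' X).ncard = (pat W '' Y).ncard := by
  rw [← hXY, ← Set.image_comp]
  apply ncard_image_congr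
  intro x hx y hy
  rw [pat_eq_iff, Function.comp, Function.comp, pat_eq_iff]
  exact hs x hx y hy

/-! Masks -/
def VA (n k i : ℕ) : Prop := k < n ∧ i ≤ k
def VB (n k i : ℕ) : Prop := 1 ≤ k ∧ k < n ∧ i ≤ k
def VC (n k i : ℕ) : Prop := (k < n ∧ i ≤ k) ∧ ¬ (k + 1 = n ∧ (i = 0 ∨ i + 1 = n))
def VD (n k i : ℕ) : Prop := (1 ≤ k ∧ k < n ∧ i ≤ k) ∧ ¬ (k + 1 = n ∧ (i = 0 ∨ i + 1 = n))
/-- apex and bottom right removed -/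
def VR (n k i : ℕ) : Prop := (1 ≤ k ∧ k < n ∧ i ≤ k) ∧ ¬ (k + 1 = n ∧ i + 1 = n)
/-- apex and bottom left removed -/
def VL (n k i : ℕ) : Prop := (1 ≤ k ∧ k < n ∧ i ≤ k) ∧ ¬ (k + 1 = n ∧ i = 0)

lemma filled_odd {r c : ℕ} (h : c % 2 = 1) : filled r c = false := by
  simp [filled, h]

lemma filled_even {r c j : ℕ} (h : c = 2 * j) : filled r c = S r j := by
  subst h; simp [filled, S]

/-- Translation of the frozen pattern sets. -/
lemma trans {V : ℕ → ℕ → Prop} {U : ℕ × ℕ → Prop} [DecidablePred U]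
    (hUV : ∀ k i, U (k, 2 * i) ↔ V k i) :
    ({p | ∃ r c : ℕ, c % 2 = 0 ∧ c ≤ 2 * r ∧
      p = fun q => if U q then filled (r + q.1) (c + q.2) else false} : Set (ℕ × ℕ → Bool)).ncard
      = (pat V '' tri).ncard := by
  have : ({p | ∃ r c : ℕ, c % 2 = 0 ∧ c ≤ 2 * r ∧
      p = fun q => if U q then filled (r + q.1) (c + q.2) else false} : Set (ℕ × ℕ → Bool))
      = (fun x : ℕ × ℕ => fun q : ℕ × ℕ =>
        if U q then filled (x.1 + q.1) (2 * x.2 + q.2) else false) '' tri := by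
    ext p
    constructor
    · rintro ⟨r, c, h1, h2, rfl⟩
      refine ⟨(r, c / 2), ?_, ?_⟩
      · simp only [tri, Set.mem_ofPred_eq]; omega
      · have : 2 * (c / 2) = c := by omega
        simp only [this]
    · rintro ⟨⟨r, j⟩, h, rfl⟩
      simp only [tri, Set.mem_ofPred_eq] at h
      exact ⟨r, 2 * j, by omega, by omega, rfl⟩
  rw [this]
  apply ncard_image_congr
  intro x _ y _
  rw [pat_eq_iff]
  constructor
  · intro h k i hv
    have := congrFun h (k, 2 * i)
    simp only [(hUV k i).2 hv, if_true] at this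
    rwa [filled_even (j := x.2 + i) (by ring), filled_even (j := y.2 + i) (by ring)] at this
  · intro h
    funext ⟨k, m⟩
    by_cases hu : U (k, m)
    · simp only [hu, if_true]
      rcases Nat.mod_two_eq_zero_or_one m with hm | hm
      · obtain ⟨i, rfl⟩ : ∃ i, m = 2 * i := ⟨m / 2, by omega⟩
        rw [filled_even (j := x.2 + i) (by ring), filled_even (j := y.2 + i) (by ring)]
        exact h k i ((hUV k i).1 hu)
      · rw [filled_odd (by omega), filled_odd (by omega)]
    · simp only [hu, if_false]

lemma card_up (n : ℕ) : (Pup n).ncard = (pat (VA n) '' tri).ncard := by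
  unfold Pup upPattern
  exact trans (U := fun q => q.1 < n ∧ q.2 ≤ 2 * q.1) (by intro k i; simp only [VA]; omega)

lemma card_top (n : ℕ) : (PtopCut n).ncard = (pat (VB n) '' tri).ncard := by
  unfold PtopCut topCutPattern
  exact trans (U := fun q => 1 ≤ q.1 ∧ q.1 < n ∧ q.2 ≤ 2 * q.1)
    (by intro k i; simp only [VB]; omega)

lemma card_bot (n : ℕ) : (PbotCut n).ncard = (pat (VC n) '' tri).ncard := by
  unfold PbotCut botCutPattern
  exact trans (U := fun q => (q.1 < n ∧ q.2 ≤ 2 * q.1) ∧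
      ¬(q.1 = n - 1 ∧ (q.2 = 0 ∨ q.2 = 2 * (n - 1))))
    (by intro k i; simp only [VC]; omega)

lemma card_full (n : ℕ) : (PfullyCut n).ncard = (pat (VD n) '' tri).ncard := by
  unfold PfullyCut fullyCutPattern
  exact trans (U := fun q => (q.1 < n ∧ q.2 ≤ 2 * q.1) ∧ q ≠ (0, 0) ∧
      ¬(q.1 = n - 1 ∧ (q.2 = 0 ∨ q.2 = 2 * (n - 1))))
    (by intro k i; simp only [VD, ne_eq, Prod.mk.injEq]; omega)

/-! Symmetries -/

lemma card_refl (n : ℕ) : (pat (VL n) '' tri).ncard = (pat (VR n) '' tri).ncard := by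
  apply cnt_congr (fun x => (x.1, x.1 - x.2))
  · ext ⟨r, j⟩
    simp only [tri, Set.mem_image, Set.mem_ofPred_eq, Prod.mk.injEq, Prod.exists]
    constructor
    · rintro ⟨a, b, h, rfl, rfl⟩; omega
    · intro h; exact ⟨r, r - j, by omega, rfl, by omega⟩
  · rintro ⟨a, b⟩ hx ⟨a', b'⟩ hy
    simp only [tri, Set.mem_ofPred_eq] at hx hy
    simp only [Same]
    constructor
    · intro h k i hv
      simp only [VR] at hv
      have := h k (k - i) (by simp only [VL]; omega)
      rw [← S_symm (by omega), ← S_symm (r := a' + k) (by omega)] at this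
      convert this using 2 <;> omega
    · intro h k i hv
      simp only [VL] at hv
      have := h k (k - i) (by simp only [VR]; omega)
      rw [← S_symm (by omega), ← S_symm (r := a' + k) (by omega)] at this
      convert this using 2 <;> omega

/-- One-directional form of rotation: cells. -/
lemma rot_cell {M n a b k i : ℕ} (hb : b ≤ a) (hM : a + n ≤ 2 ^ M) (hk : k < n) (hi : i ≤ k) :
    S ((2 ^ M - b - n) + (n - 1 - i)) ((a - b) + (k - i)) = S (a + k) (b + i) :=
  S_rot M _ _ _ _ (by omega) (by omega) (by omega) (by omega)

lemma fin_pat {V : ℕ → ℕ → Prop} (n : ℕ) (hV : ∀ k i, V k i → k < n ∧ i ≤ k)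
    (X : Set (ℕ × ℕ)) : (pat V '' X).Finite := by
  have hf : (Set.Iio n ×ˢ Set.Iio n : Set (ℕ × ℕ)).Finite :=
    (Set.finite_Iio n).prod (Set.finite_Iio n)
  refine hf.finite_subsets.subset ?_
  rintro _ ⟨x, _, rfl⟩ ⟨k, i⟩ ⟨hv, _⟩
  have := hV k i hv
  simp only [Set.mem_prod, Set.mem_Iio]
  omega

lemma rot_le {V W : ℕ → ℕ → Prop} (n : ℕ) (hV : ∀ k i, V k i → k < n ∧ i ≤ k)
    (hW : ∀ k i, W k i → k < n ∧ i ≤ k)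
    (hVW : ∀ k i, k < n → i ≤ k → (V k i ↔ W (n - 1 - i) (k - i))) :
    (pat V '' tri).ncard ≤ (pat W '' tri).ncard := by
  have hp : ∀ m : ℕ, m ≤ 2 ^ m := fun m => Nat.lt_two_pow_self.le
  rw [cnt_congr (W := W) (Y := (fun x : ℕ × ℕ => (2 ^ (x.1 + n) - x.2 - n, x.1 - x.2)) '' tri)
    (fun x => (2 ^ (x.1 + n) - x.2 - n, x.1 - x.2)) rfl]
  · apply Set.ncard_le_ncard _ (fin_pat n hW _)
    apply Set.image_mono
    rintro _ ⟨⟨a, b⟩, h, rfl⟩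
    simp only [tri, Set.mem_ofPred_eq] at h ⊢
    have := hp (a + n)
    omega
  · rintro ⟨a, b⟩ hx ⟨a', b'⟩ hy
    simp only [tri, Set.mem_ofPred_eq] at hx hy
    simp only [Same]
    constructor
    · intro h k' i' hw
      have hb := hW k' i' hw
      obtain ⟨k, i, hk, hi, rfl, rfl⟩ : ∃ k i, k < n ∧ i ≤ k ∧ k' = n - 1 - i ∧ i' = k - i :=
        ⟨i' + (n - 1 - k'), n - 1 - k', by omega, by omega, by omega, by omega⟩
      rw [rot_cell hx (hp _) hk hi, rot_cell hy (hp _) hk hi]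
      exact h k i ((hVW k i hk hi).2 hw)
    · intro h k i hv
      have hb := hV k i hv
      have := h _ _ ((hVW k i hb.1 hb.2).1 hv)
      rwa [rot_cell hx (hp _) hb.1 hb.2, rot_cell hy (hp _) hb.1 hb.2] at this

lemma card_VR (n : ℕ) : (pat (VR n) '' tri).ncard = (pat (VC n) '' tri).ncard := by
  have h1 : (pat (VC n) '' tri).ncard ≤ (pat (VR n) '' tri).ncard :=
    rot_le n (by intro k i; simp only [VC]; omega) (by intro k i; simp only [VR]; omega)
      (by intro k i; simp only [VC, VR]; omega)
  have h2 : (pat (VL n) '' tri).ncard ≤ (pat (VC n) '' tri).ncard :=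
    rot_le n (by intro k i; simp only [VL]; omega) (by intro k i; simp only [VC]; omega)
      (by intro k i; simp only [VC, VL]; omega)
  rw [card_refl] at h2
  omega

lemma card_VL (n : ℕ) : (pat (VL n) '' tri).ncard = (pat (VC n) '' tri).ncard := by
  rw [card_refl, card_VR]

/-! Class counts -/

/-- Generic class count. `d` is the coarse shift of the position and `σ` the map giving, for
each fine cell, the coarse cell it copies. -/
lemma cls_card {V W : ℕ → ℕ → Prop} (ε δ s : ℕ) (hε : ε < 2) (hδ : δ < 2)
    (hs : s = if ε = 0 ∧ δ = 1 then 1 else 0)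
    (h1 : ∀ k i, V k i → (k + ε) % 2 = 0 → (i + δ) % 2 = 0 → W ((k + ε) / 2 + s) ((i + δ) / 2))
    (h2 : ∀ k i, V k i → (k + ε) % 2 = 1 → W ((k + ε) / 2 + s) ((i + δ) / 2))
    (h3 : ∀ k' i', W k' i' → ∃ k i, V k i ∧ (k + ε) / 2 + s = k' ∧ (i + δ) / 2 = i' ∧
      ((k + ε) % 2 = 1 ∨ (i + δ) % 2 = 0)) :
    (pat V '' cls ε δ).ncard = (pat W '' tri).ncard := by
  have key : ∀ a b k i, s ≤ a → a % 2 = a % 2 → ((k + ε) % 2 = 1 ∨ (i + δ) % 2 = 0) →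
      S (2 * a + ε + k) (2 * b + δ + i) = S (a - s + ((k + ε) / 2 + s)) (b + (i + δ) / 2) := by
    intro a b k i ha _ h
    rcases Nat.mod_two_eq_zero_or_one (k + ε) with hk | hk <;>
      rcases Nat.mod_two_eq_zero_or_one (i + δ) with hi | hi
    · exact S00' (by omega) (by omega)
    · omega
    · exact S10' (by omega) (by omega)
    · exact S11' (by omega) (by omega)
  apply cnt_congr (fun x => (x.1 / 2 - s, x.2 / 2))
  · ext ⟨r, j⟩
    simp only [tri, cls, Set.mem_image, Set.mem_ofPred_eq, Prod.mk.injEq, Prod.exists]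
    constructor
    · rintro ⟨a, b, ⟨h, h', h''⟩, rfl, rfl⟩
      split_ifs at hs <;> omega
    · intro h
      refine ⟨2 * (r + s) + ε, 2 * j + δ, ?_, ?_, ?_⟩ <;> split_ifs at hs <;> omega
  · rintro ⟨a, b⟩ hx ⟨a', b'⟩ hy
    simp only [cls, Set.mem_ofPred_eq] at hx hy
    obtain ⟨A, rfl⟩ : ∃ A, a = 2 * A + ε := ⟨a / 2, by omega⟩
    obtain ⟨A', rfl⟩ : ∃ A, a' = 2 * A + ε := ⟨a' / 2, by omega⟩
    obtain ⟨B, rfl⟩ : ∃ A, b = 2 * A + δ := ⟨b / 2, by omega⟩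
    obtain ⟨B', rfl⟩ : ∃ A, b' = 2 * A + δ := ⟨b' / 2, by omega⟩
    have e1 : ∀ A, (2 * A + ε) / 2 = A := by omega
    have e2 : ∀ A, (2 * A + δ) / 2 = A := by omega
    have hA : s ≤ A := by split_ifs at hs <;> omega
    have hA' : s ≤ A' := by split_ifs at hs <;> omega
    simp only [Same, e1, e2]
    constructor
    · intro h k' i' hw
      obtain ⟨k, i, hv, rfl, rfl, hc⟩ := h3 k' i' hw
      rw [← key A B k i hA rfl hc, ← key A' B' k i hA' rfl hc]
      exact h k i hv
    · intro h k i hv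
      by_cases hc : (k + ε) % 2 = 1 ∨ (i + δ) % 2 = 0
      · rw [key A B k i hA rfl hc, key A' B' k i hA' rfl hc]
        apply h
        rcases Nat.mod_two_eq_zero_or_one (k + ε) with hk | hk
        · exact h1 k i hv hk (by omega)
        · exact h2 k i hv hk
      · rw [S01' (by omega) (by omega), S01' (by omega) (by omega)]

lemma even00 (n : ℕ) : (pat (VB (2 * n)) '' cls 0 0).ncard = (pat (VA n) '' tri).ncard := by
  apply cls_card 0 0 0 (by omega) (by omega) (by simp)
  · intro k i; simp only [VA, VB]; omega
  · intro k i; simp only [VA, VB]; omega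
  · intro k' i' h
    simp only [VA] at h
    refine ⟨2 * k' + 1, 2 * i', ?_, by omega, by omega, by omega⟩
    simp only [VB]; omega

lemma even01 (n : ℕ) : (pat (VB (2 * n)) '' cls 0 1).ncard = (pat (VB (n + 1)) '' tri).ncard := by
  apply cls_card 0 1 1 (by omega) (by omega) (by simp)
  · intro k i; simp only [VB]; omega
  · intro k i; simp only [VB]; omega
  · intro k' i' h
    simp only [VB] at h
    refine ⟨2 * k' - 1, 2 * i' - 1, ?_, by omega, by omega, by omega⟩
    simp only [VB]; omega

lemma even10 (n : ℕ) : (pat (VB (2 * n)) '' cls 1 0).ncard = (pat (VR (n + 1)) '' tri).ncard := by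
  apply cls_card 1 0 0 (by omega) (by omega) (by simp)
  · intro k i; simp only [VB, VR]; omega
  · intro k i; simp only [VB, VR]; omega
  · intro k' i' h
    simp only [VR] at h
    by_cases hk : k' = n
    · refine ⟨2 * k' - 1, 2 * i', ?_, by omega, by omega, by omega⟩
      simp only [VB]; omega
    · refine ⟨2 * k', 2 * i', ?_, by omega, by omega, by omega⟩
      simp only [VB]; omega

lemma even11 (n : ℕ) : (pat (VB (2 * n)) '' cls 1 1).ncard = (pat (VL (n + 1)) '' tri).ncard := by
  apply cls_card 1 1 0 (by omega) (by omega) (by simp)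
  · intro k i; simp only [VB, VL]; omega
  · intro k i; simp only [VB, VL]; omega
  · intro k' i' h
    simp only [VL] at h
    by_cases hk : k' = n
    · refine ⟨2 * k' - 1, 2 * i' - 1, ?_, by omega, by omega, by omega⟩
      simp only [VB]; omega
    · refine ⟨2 * k', 2 * i' - 1, ?_, by omega, by omega, by omega⟩
      simp only [VB]; omega

lemma odd00 (n : ℕ) (hn : 2 ≤ n) :
    (pat (VB (2 * n + 1)) '' cls 0 0).ncard = (pat (VA (n + 1)) '' tri).ncard := by
  apply cls_card 0 0 0 (by omega) (by omega) (by simp)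
  · intro k i; simp only [VA, VB]; omega
  · intro k i; simp only [VA, VB]; omega
  · intro k' i' h
    simp only [VA] at h
    by_cases hk : k' = n
    · refine ⟨2 * k', 2 * i', ?_, by omega, by omega, by omega⟩
      simp only [VB]; omega
    · refine ⟨2 * k' + 1, 2 * i', ?_, by omega, by omega, by omega⟩
      simp only [VB]; omega

lemma odd01 (n : ℕ) :
    (pat (VB (2 * n + 1)) '' cls 0 1).ncard = (pat (VD (n + 2)) '' tri).ncard := by
  apply cls_card 0 1 1 (by omega) (by omega) (by simp)
  · intro k i; simp only [VB, VD]; omega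
  · intro k i; simp only [VB, VD]; omega
  · intro k' i' h
    simp only [VD] at h
    by_cases hk : k' = n + 1
    · refine ⟨2 * k' - 2, 2 * i' - 1, ?_, by omega, by omega, by omega⟩
      simp only [VB]; omega
    · refine ⟨2 * k' - 1, 2 * i' - 1, ?_, by omega, by omega, by omega⟩
      simp only [VB]; omega

lemma odd10 (n : ℕ) :
    (pat (VB (2 * n + 1)) '' cls 1 0).ncard = (pat (VB (n + 1)) '' tri).ncard := by
  apply cls_card 1 0 0 (by omega) (by omega) (by simp)
  · intro k i; simp only [VB]; omega
  · intro k i; simp only [VB]; omega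
  · intro k' i' h
    simp only [VB] at h
    refine ⟨2 * k', 2 * i', ?_, by omega, by omega, by omega⟩
    simp only [VB]; omega

lemma odd11 (n : ℕ) :
    (pat (VB (2 * n + 1)) '' cls 1 1).ncard = (pat (VB (n + 1)) '' tri).ncard := by
  apply cls_card 1 1 0 (by omega) (by omega) (by simp)
  · intro k i; simp only [VB]; omega
  · intro k i; simp only [VB]; omega
  · intro k' i' h
    simp only [VB] at h
    refine ⟨2 * k', 2 * i' - 1, ?_, by omega, by omega, by omega⟩
    simp only [VB]; omega

/-! Overlaps -/

def P (N ε δ : ℕ) : Set (Set (ℕ × ℕ)) := pat (VB N) '' cls ε δ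

lemma P_zero {N ε δ : ℕ} {s : Set (ℕ × ℕ)} (hs : s ∈ P N ε δ) {k i : ℕ}
    (hk : (k + ε) % 2 = 0) (hi : (i + δ) % 2 = 1) : (k, i) ∉ s := by
  obtain ⟨⟨a, b⟩, h, rfl⟩ := hs
  simp only [cls, Set.mem_ofPred_eq] at h
  rintro ⟨_, h'⟩
  simp only at h'
  rw [S01' (by omega) (by omega)] at h'
  exact absurd h' (by decide)

/-- Copying from cell `(k, i)` to cell `(k', i')` of the same block. -/
lemma P_copy {N ε δ : ℕ} {s : Set (ℕ × ℕ)} (hs : s ∈ P N ε δ) {k i k' i' : ℕ}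
    (hk : (k + ε) / 2 = (k' + ε) / 2) (hi : (i + δ) / 2 = (i' + δ) / 2)
    (hc : (k + ε) % 2 = 1 ∨ (i + δ) % 2 = 0)
    (hc' : (k' + ε) % 2 = 1 ∨ (i' + δ) % 2 = 0)
    (hv : VB N k' i') (h0 : (k, i) ∈ s) : (k', i') ∈ s := by
  obtain ⟨⟨a, b⟩, h, rfl⟩ := hs
  simp only [cls, Set.mem_ofPred_eq] at h
  have key : ∀ k i, ((k + ε) % 2 = 1 ∨ (i + δ) % 2 = 0) →
      S (a + k) (b + i) = S (a / 2 + (k + ε) / 2) (b / 2 + (i + δ) / 2) := by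
    intro k i h
    rcases Nat.mod_two_eq_zero_or_one (k + ε) with hk | hk <;>
      rcases Nat.mod_two_eq_zero_or_one (i + δ) with hi | hi
    · exact S00' (by omega) (by omega)
    · omega
    · exact S10' (by omega) (by omega)
    · exact S11' (by omega) (by omega)
  refine ⟨hv, ?_⟩
  have h1 := h0.2
  simp only at h1 ⊢
  rw [key _ _ hc, hk, hi] at h1
  rw [key _ _ hc', h1]

lemma P_vis {N ε δ : ℕ} {s : Set (ℕ × ℕ)} (hs : s ∈ P N ε δ) {k i : ℕ} (h : (k, i) ∈ s) :
    1 ≤ k ∧ k < N ∧ i ≤ k := by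
  obtain ⟨⟨a, b⟩, _, rfl⟩ := hs
  exact h.1

/-- same row parity -/
lemma ov_row {N ε : ℕ} (hε : ε < 2) {s : Set (ℕ × ℕ)} (h0 : s ∈ P N ε 0) (h1 : s ∈ P N ε 1)
    {k i : ℕ} (h : (k, i) ∈ s) : k = 1 ∧ ε = 0 := by
  have hv := P_vis h0 h
  have z0 : ∀ k i, (k + ε) % 2 = 0 → (k, i) ∉ s := by
    intro k i hk
    rcases Nat.mod_two_eq_zero_or_one i with hi | hi
    · exact P_zero h1 hk (by omega)
    · exact P_zero h0 hk (by omega)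
  rcases Nat.mod_two_eq_zero_or_one (k + ε) with hk | hk
  · exact absurd h (z0 k i hk)
  by_contra hne
  have hk2 : 2 ≤ k := by omega
  rcases Nat.mod_two_eq_zero_or_one i with hi | hi
  · by_cases hik : i + 1 ≤ k
    · exact z0 (k - 1) i (by omega) (P_copy h0 (k' := k - 1) (i' := i) (by omega) (by omega)
        (by omega) (by omega) (by simp only [VB]; omega) h)
    · exact z0 (k - 1) (i - 1) (by omega) (P_copy h1 (k' := k - 1) (i' := i - 1) (by omega)
        (by omega) (by omega) (by omega) (by simp only [VB]; omega) h)
  · by_cases hik : i + 1 ≤ k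
    · exact z0 (k - 1) i (by omega) (P_copy h1 (k' := k - 1) (i' := i) (by omega) (by omega)
        (by omega) (by omega) (by simp only [VB]; omega) h)
    · exact z0 (k - 1) (i - 1) (by omega) (P_copy h0 (k' := k - 1) (i' := i - 1) (by omega)
        (by omega) (by omega) (by omega) (by simp only [VB]; omega) h)

/-- same column parity -/
lemma ov_col {N δ : ℕ} {s : Set (ℕ × ℕ)} (h0 : s ∈ P N 0 δ) (h1 : s ∈ P N 1 δ)
    {k i : ℕ} (h : (k, i) ∈ s) : k + 1 = N ∧ i + 1 = N ∧ (i + δ) % 2 = 0 := by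
  have hv := P_vis h0 h
  have z0 : ∀ k i, (i + δ) % 2 = 1 → (k, i) ∉ s := by
    intro k i hi
    rcases Nat.mod_two_eq_zero_or_one k with hk | hk
    · exact P_zero h0 (by omega) hi
    · exact P_zero h1 (by omega) hi
  rcases Nat.mod_two_eq_zero_or_one (i + δ) with hi | hi
  swap
  · exact absurd h (z0 k i hi)
  by_contra hne
  by_cases hkN : k + 1 < N
  · rcases Nat.mod_two_eq_zero_or_one k with hk | hk
    · exact z0 (k + 1) (i + 1) (by omega) (P_copy h0 (k' := k + 1) (i' := i + 1) (by omega)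
        (by omega) (by omega) (by omega) (by simp only [VB]; omega) h)
    · exact z0 (k + 1) (i + 1) (by omega) (P_copy h1 (k' := k + 1) (i' := i + 1) (by omega)
        (by omega) (by omega) (by omega) (by simp only [VB]; omega) h)
  · rcases Nat.mod_two_eq_zero_or_one k with hk | hk
    · exact z0 k (i + 1) (by omega) (P_copy h1 (k' := k) (i' := i + 1) (by omega)
        (by omega) (by omega) (by omega) (by simp only [VB]; omega) h)
    · exact z0 k (i + 1) (by omega) (P_copy h0 (k' := k) (i' := i + 1) (by omega)
        (by omega) (by omega) (by omega) (by simp only [VB]; omega) h)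

/-- both parities differ -/
lemma ov_diag {N ε δ ε' δ' : ℕ} (hε : ε + ε' = 1) (hδ : δ + δ' = 1) {s : Set (ℕ × ℕ)}
    (h0 : s ∈ P N ε δ) (h1 : s ∈ P N ε' δ')
    {k i : ℕ} (h : (k, i) ∈ s) : k + 1 = N ∧ i = 0 ∧ (k + i + ε + δ) % 2 = 0 := by
  have hv := P_vis h0 h
  have z0 : ∀ k i, (k + i + ε + δ) % 2 = 1 → (k, i) ∉ s := by
    intro k i hi
    rcases Nat.mod_two_eq_zero_or_one (k + ε) with hk | hk
    · exact P_zero h0 (by omega) (by omega)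
    · exact P_zero h1 (by omega) (by omega)
  rcases Nat.mod_two_eq_zero_or_one (k + i + ε + δ) with hi | hi
  swap
  · exact absurd h (z0 k i hi)
  by_contra hne
  by_cases hkN : k + 1 < N
  · rcases Nat.mod_two_eq_zero_or_one (k + ε) with hk | hk
    · exact z0 (k + 1) i (by omega) (P_copy h0 (k' := k + 1) (i' := i) (by omega)
        (by omega) (by omega) (by omega) (by simp only [VB]; omega) h)
    · exact z0 (k + 1) i (by omega) (P_copy h1 (k' := k + 1) (i' := i) (by omega)
        (by omega) (by omega) (by omega) (by simp only [VB]; omega) h)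
  · rcases Nat.mod_two_eq_zero_or_one (k + ε) with hk | hk
    · exact z0 k (i - 1) (by omega) (P_copy h1 (k' := k) (i' := i - 1) (by omega)
        (by omega) (by omega) (by omega) (by simp only [VB]; omega) h)
    · exact z0 k (i - 1) (by omega) (P_copy h0 (k' := k) (i' := i - 1) (by omega)
        (by omega) (by omega) (by omega) (by simp only [VB]; omega) h)

/-! Existence of special patterns -/

lemma blank_mem (N : ℕ) {ε δ : ℕ} (hε : ε < 2) (hδ : δ < 2) : (∅ : Set (ℕ × ℕ)) ∈ P N ε δ := by
  have hp : 4 * N + 8 < 2 ^ (4 * N + 8) := Nat.lt_two_pow_self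
  have he : 2 ^ (4 * N + 8) = 2 * 2 ^ (4 * N + 7) := by ring
  refine ⟨(2 ^ (4 * N + 8) + ε, 2 * N + 2 + δ), ?_, ?_⟩
  · simp only [cls, Set.mem_ofPred_eq]; omega
  · ext ⟨k, i⟩
    simp only [pat, VB, Set.mem_ofPred_eq, Set.mem_empty_iff_false, iff_false, not_and]
    intro hv
    rw [add_assoc, S_hole _ _ _ (by omega) (by omega)]
    decide

def topS : Set (ℕ × ℕ) := {(1, 0), (1, 1)}

lemma top_mem (N : ℕ) (hN : 2 ≤ N) {δ : ℕ} (hδ : δ < 2) : topS ∈ P N 0 δ := by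
  have hp : 4 * N + 8 < 2 ^ (4 * N + 8) := Nat.lt_two_pow_self
  have he : 2 ^ (4 * N + 8) = 2 * 2 ^ (4 * N + 7) := by ring
  refine ⟨(2 ^ (4 * N + 8) - 2, 2 * N + 2 + δ), ?_, ?_⟩
  · simp only [cls, Set.mem_ofPred_eq]; omega
  · ext ⟨k, i⟩
    simp only [pat, VB, Set.mem_ofPred_eq, topS, Set.mem_insert_iff, Set.mem_singleton_iff,
      Prod.mk.injEq]
    constructor
    · rintro ⟨hv, h⟩
      by_contra hne
      have hk : 2 ≤ k := by omega
      have e : 2 ^ (4 * N + 8) - 2 + k = 2 ^ (4 * N + 8) + (k - 2) := by omega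
      rw [e, S_hole _ _ _ (by omega) (by omega)] at h
      exact absurd h (by decide)
    · intro h
      refine ⟨by omega, S_full (4 * N + 8) _ _ (by omega) (by omega)⟩

lemma bl_mem (N : ℕ) (hN : 2 ≤ N) {ε δ : ℕ} (hε : ε < 2) (hδ : δ < 2)
    (hp : (N + 1 + ε + δ) % 2 = 0) : ({(N - 1, 0)} : Set (ℕ × ℕ)) ∈ P N ε δ := by
  have hp : 4 * N + 8 < 2 ^ (4 * N + 8) := Nat.lt_two_pow_self
  have he : 2 ^ (4 * N + 8) = 2 * 2 ^ (4 * N + 7) := by ring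
  refine ⟨(2 ^ (4 * N + 8) + (2 * N + δ) - (N - 1), 2 * N + δ), ?_, ?_⟩
  · simp only [cls, Set.mem_ofPred_eq]; omega
  · ext ⟨k, i⟩
    simp only [pat, VB, Set.mem_ofPred_eq, Set.mem_singleton_iff, Prod.mk.injEq]
    have e : 2 ^ (4 * N + 8) + (2 * N + δ) - (N - 1) + k
      = 2 ^ (4 * N + 8) + (2 * N + δ - (N - 1) + k) := by omega
    rw [e]
    constructor
    · rintro ⟨hv, h⟩
      by_contra hne
      rw [S_hole _ _ _ (by omega) (by omega)] at h
      exact absurd h (by decide)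
    · rintro ⟨rfl, rfl⟩
      refine ⟨by omega, ?_⟩
      have := S_edge' (4 * N + 8) (2 * N + δ) (by omega)
      convert this using 2 <;> omega

lemma br_mem (N : ℕ) (hN : 2 ≤ N) {ε δ : ℕ} (hε : ε < 2)
    (hδ : δ = (N + 1) % 2) : ({(N - 1, N - 1)} : Set (ℕ × ℕ)) ∈ P N ε δ := by
  have hp : 4 * N + 8 < 2 ^ (4 * N + 8) := Nat.lt_two_pow_self
  have he : 2 ^ (4 * N + 8) = 2 * 2 ^ (4 * N + 7) := by ring
  refine ⟨(2 ^ (4 * N + 8) + ε, 2 ^ (4 * N + 8) - (N - 1)), ?_, ?_⟩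
  · simp only [cls, Set.mem_ofPred_eq]; omega
  · ext ⟨k, i⟩
    simp only [pat, VB, Set.mem_ofPred_eq, Set.mem_singleton_iff, Prod.mk.injEq]
    rw [add_assoc]
    constructor
    · rintro ⟨hv, h⟩
      by_contra hne
      rw [S_hole _ _ _ (by omega) (by omega)] at h
      exact absurd h (by decide)
    · rintro ⟨rfl, rfl⟩
      refine ⟨by omega, ?_⟩
      have := S_edge (4 * N + 8) (ε + (N - 1)) (by omega)
      convert this using 2 <;> omega

lemma sub_single {s : Set (ℕ × ℕ)} {q : ℕ × ℕ} (h : ∀ k i, (k, i) ∈ s → (k, i) = q) :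
    s = ∅ ∨ s = {q} := Set.subset_singleton_iff_eq.1 (fun ⟨k, i⟩ hx => h k i hx)

/-! Intersections -/

lemma int_00_01 {N : ℕ} (hN : 2 ≤ N) : P N 0 0 ∩ P N 0 1 = {∅, topS} := by
  ext s
  simp only [Set.mem_inter_iff, Set.mem_insert_iff, Set.mem_singleton_iff]
  constructor
  · rintro ⟨h0, h1⟩
    have hq : ∀ k i, (k, i) ∈ s → k = 1 ∧ i ≤ 1 := by
      intro k i h
      have := ov_row (by omega) h0 h1 h
      have := P_vis h0 h
      omega
    by_cases h : (1, 0) ∈ s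
    · right
      have h' : (1, 1) ∈ s := P_copy h0 (k' := 1) (i' := 1) (by omega) (by omega) (by omega)
        (by omega) (by simp only [VB]; omega) h
      ext ⟨k, i⟩
      simp only [topS, Set.mem_insert_iff, Set.mem_singleton_iff, Prod.mk.injEq]
      constructor
      · intro hm; have := hq k i hm; omega
      · rintro (⟨rfl, rfl⟩ | ⟨rfl, rfl⟩) <;> assumption
    · left
      have h' : (1, 1) ∉ s := fun hm => h (P_copy h0 (k' := 1) (i' := 0) (by omega) (by omega)
        (by omega) (by omega) (by simp only [VB]; omega) hm)
      ext ⟨k, i⟩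
      simp only [Set.mem_empty_iff_false, iff_false]
      intro hm
      obtain ⟨rfl, hi⟩ := hq k i hm
      obtain rfl | rfl : i = 0 ∨ i = 1 := by omega
      · exact h hm
      · exact h' hm
  · rintro (rfl | rfl)
    · exact ⟨blank_mem N (by omega) (by omega), blank_mem N (by omega) (by omega)⟩
    · exact ⟨top_mem N hN (by omega), top_mem N hN (by omega)⟩

lemma int_10_11 {N : ℕ} : P N 1 0 ∩ P N 1 1 = {∅} := by
  ext s
  simp only [Set.mem_inter_iff, Set.mem_singleton_iff]
  constructor
  · rintro ⟨h0, h1⟩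
    ext ⟨k, i⟩
    simp only [Set.mem_empty_iff_false, iff_false]
    intro h
    have := ov_row (by omega) h0 h1 h
    omega
  · rintro rfl
    exact ⟨blank_mem N (by omega) (by omega), blank_mem N (by omega) (by omega)⟩

lemma int_col {N δ : ℕ} (hN : 2 ≤ N) (hδ : δ = (N + 1) % 2) :
    P N 0 δ ∩ P N 1 δ = {∅, {(N - 1, N - 1)}} := by
  ext s
  simp only [Set.mem_inter_iff, Set.mem_insert_iff, Set.mem_singleton_iff]
  constructor
  · rintro ⟨h0, h1⟩
    apply sub_single
    intro k i h
    have := ov_col h0 h1 h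
    rw [Prod.mk.injEq]; omega
  · rintro (rfl | rfl)
    · exact ⟨blank_mem N (by omega) (by omega), blank_mem N (by omega) (by omega)⟩
    · exact ⟨br_mem N hN (by omega) hδ, br_mem N hN (by omega) hδ⟩

lemma int_col' {N δ : ℕ} (hd : δ < 2) (hδ : δ ≠ (N + 1) % 2) :
    P N 0 δ ∩ P N 1 δ = {∅} := by
  ext s
  simp only [Set.mem_inter_iff, Set.mem_singleton_iff]
  constructor
  · rintro ⟨h0, h1⟩
    ext ⟨k, i⟩
    simp only [Set.mem_empty_iff_false, iff_false]
    intro h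
    have := ov_col h0 h1 h
    omega
  · rintro rfl
    exact ⟨blank_mem N (by omega) (by omega), blank_mem N (by omega) (by omega)⟩

lemma int_diag {N ε δ ε' δ' : ℕ} (hN : 2 ≤ N) (hε : ε + ε' = 1) (hδ : δ + δ' = 1)
    (hp : (N + 1 + ε + δ) % 2 = 0) :
    P N ε δ ∩ P N ε' δ' = {∅, {(N - 1, 0)}} := by
  ext s
  simp only [Set.mem_inter_iff, Set.mem_insert_iff, Set.mem_singleton_iff]
  constructor
  · rintro ⟨h0, h1⟩
    apply sub_single
    intro k i h
    have := ov_diag hε hδ h0 h1 h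
    rw [Prod.mk.injEq]; omega
  · rintro (rfl | rfl)
    · exact ⟨blank_mem N (by omega) (by omega), blank_mem N (by omega) (by omega)⟩
    · exact ⟨bl_mem N hN (by omega) (by omega) hp, bl_mem N hN (by omega) (by omega) (by omega)⟩

lemma int_diag' {N ε δ ε' δ' : ℕ} (hε : ε + ε' = 1) (hδ : δ + δ' = 1)
    (hp : (N + 1 + ε + δ) % 2 = 1) :
    P N ε δ ∩ P N ε' δ' = {∅} := by
  ext s
  simp only [Set.mem_inter_iff, Set.mem_singleton_iff]
  constructor
  · rintro ⟨h0, h1⟩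
    ext ⟨k, i⟩
    simp only [Set.mem_empty_iff_false, iff_false]
    intro h
    have := ov_diag hε hδ h0 h1 h
    omega
  · rintro rfl
    exact ⟨blank_mem N (by omega) (by omega), blank_mem N (by omega) (by omega)⟩

lemma P_fin (N ε δ : ℕ) : (P N ε δ).Finite :=
  fin_pat N (by intro k i; simp only [VB]; omega) _

lemma tri_eq : tri = ((cls 0 0 ∪ cls 0 1) ∪ cls 1 0) ∪ cls 1 1 := by
  ext ⟨r, j⟩
  simp only [tri, cls, Set.mem_union, Set.mem_ofPred_eq]
  omega

lemma union_count {α : Type*} {A B C D : Set α} (hA : A.Finite) (hB : B.Finite) (hC : C.Finite)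
    (hD : D.Finite) (h1 : (A ∩ B).ncard = 2) (h2 : ((A ∪ B) ∩ C).ncard = 2)
    (h3 : (((A ∪ B) ∪ C) ∩ D).ncard = 2) :
    (((A ∪ B) ∪ C) ∪ D).ncard + 6 = A.ncard + B.ncard + C.ncard + D.ncard := by
  have e1 := Set.ncard_union_add_ncard_inter A B hA hB
  have e2 := Set.ncard_union_add_ncard_inter (A ∪ B) C (hA.union hB) hC
  have e3 := Set.ncard_union_add_ncard_inter ((A ∪ B) ∪ C) D ((hA.union hB).union hC) hD
  omega

lemma total (N : ℕ) (hN : 4 ≤ N) : (pat (VB N) '' tri).ncard + 6 =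
    (P N 0 0).ncard + (P N 0 1).ncard + (P N 1 0).ncard + (P N 1 1).ncard := by
  have ht : (pat (VB N) '' tri) = ((P N 0 0 ∪ P N 0 1) ∪ P N 1 0) ∪ P N 1 1 := by
    rw [tri_eq, Set.image_union, Set.image_union, Set.image_union]; rfl
  have htop : ({∅, topS} : Set (Set (ℕ × ℕ))).ncard = 2 :=
    Set.ncard_pair (Set.insert_nonempty _ _).ne_empty.symm
  have hs : ∀ q : ℕ × ℕ, ({∅, {q}} : Set (Set (ℕ × ℕ))).ncard = 2 := fun q =>
    Set.ncard_pair (Set.singleton_ne_empty q).symm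
  rw [ht]
  have u1 : ∀ a : Set (ℕ × ℕ), ({∅} ∪ {∅, a} : Set (Set (ℕ × ℕ))) = {∅, a} := by
    intro a; ext; simp; tauto
  have u2 : ∀ a : Set (ℕ × ℕ), ({∅, a} ∪ {∅} : Set (Set (ℕ × ℕ))) = {∅, a} := by
    intro a; ext; simp
  apply union_count (P_fin _ _ _) (P_fin _ _ _) (P_fin _ _ _) (P_fin _ _ _)
  · rw [int_00_01 (by omega), htop]
  · rw [Set.union_inter_distrib_right]
    rcases Nat.mod_two_eq_zero_or_one N with h | h
    · rw [int_col' (by omega) (by omega), int_diag (by omega) (by omega) (by omega) (by omega),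
        u1, hs]
    · rw [int_col (by omega) (by omega), int_diag' (by omega) (by omega) (by omega), u2, hs]
  · rw [Set.union_inter_distrib_right, Set.union_inter_distrib_right, int_10_11]
    rcases Nat.mod_two_eq_zero_or_one N with h | h
    · rw [int_col (by omega) (by omega), int_diag' (by omega) (by omega) (by omega),
        u1, u2, hs]
    · rw [int_col' (by omega) (by omega), int_diag (by omega) (by omega) (by omega) (by omega),
        u2, u2, hs]

end SierB

theorem sierpinski_recursion_B (n : ℕ) (hn : 2 ≤ n) :
    (PtopCut (2 * n)).ncard + 6 =
      (Pup n).ncard + 2 * (PbotCut (n + 1)).ncard + (PtopCut (n + 1)).ncard ∧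
    (PtopCut (2 * n + 1)).ncard + 6 =
      (Pup (n + 1)).ncard + 2 * (PtopCut (n + 1)).ncard + (PfullyCut (n + 2)).ncard := by
  open SierB in
  rw [card_top, card_top, card_top, card_up, card_up, card_bot, card_full,
    total _ (by omega), total _ (by omega)]
  open SierB in
  simp only [P]
  open SierB in
  rw [even00, even01, even10, even11, odd00 n hn, odd01, odd10, odd11, card_VR, card_VL]
  constructor <;> ring
end

section
/- For every n ≥ 2, the pattern counts of the Sierpiński triangle satisfy C_{2n} + 6 = A_n + 2·C_{n+1} + D_{n+1} and C_{2n+1} + 6 = C_{n+1} + 2·B_{n+1} + D_{n+2}. -/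
namespace SierpC

/-- Pascal's triangle mod 2. -/
def S (i j : ℕ) : Bool := decide (Nat.choose i j % 2 = 1)

theorem choose_mod_two (i j : ℕ) :
    Nat.choose i j % 2 = (Nat.choose (i % 2) (j % 2) * Nat.choose (i / 2) (j / 2)) % 2 := by
  have : Fact (Nat.Prime 2) := ⟨Nat.prime_two⟩
  exact Choose.choose_modEq_choose_mod_mul_choose_div_nat (p := 2) (n := i) (k := j)

theorem S_rec (i j : ℕ) :
    S i j = (S (i / 2) (j / 2) && !(decide (i % 2 = 0 ∧ j % 2 = 1))) := by
  unfold S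
  rw [choose_mod_two i j]
  rcases Nat.mod_two_eq_zero_or_one i with h | h <;>
    rcases Nat.mod_two_eq_zero_or_one j with h' | h' <;> simp [h, h']

theorem S_zero {i j : ℕ} (h : i < j) : S i j = false := by
  simp [S, Nat.choose_eq_zero_of_lt h]

theorem S_symm {i j : ℕ} (h : j ≤ i) : S i (i - j) = S i j := by
  simp [S, Nat.choose_symm h]

theorem S_col_zero (i : ℕ) : S i 0 = true := by simp [S]

theorem S_two_mul (i j a b : ℕ) :
    S (2 * i + a) (2 * j + b) =
      (S (i + a / 2) (j + b / 2) && !(decide (a % 2 = 0 ∧ b % 2 = 1))) := by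
  rw [S_rec]
  have e1 : (2 * i + a) / 2 = i + a / 2 := by omega
  have e2 : (2 * j + b) / 2 = j + b / 2 := by omega
  have e3 : (2 * i + a) % 2 = a % 2 := by omega
  have e4 : (2 * j + b) % 2 = b % 2 := by omega
  rw [e1, e2, e3, e4]

theorem S_block (s : ℕ) : ∀ (A B a b : ℕ), a < 2 ^ s → b < 2 ^ s →
    S (2 ^ s * A + a) (2 ^ s * B + b) = (S A B && S a b) := by
  induction s with
  | zero =>
    intro A B a b ha hb
    have ha : a = 0 := by simpa using ha
    have hb : b = 0 := by simpa using hb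
    subst ha; subst hb
    simp [S_col_zero]
  | succ s ih =>
    intro A B a b ha hb
    have e1 : 2 ^ (s + 1) * A + a = 2 * (2 ^ s * A) + a := by ring
    have e2 : 2 ^ (s + 1) * B + b = 2 * (2 ^ s * B) + b := by ring
    rw [pow_succ] at ha hb
    rw [e1, e2, S_two_mul, ih A B (a / 2) (b / 2) (by omega) (by omega), S_rec a b, Bool.and_assoc]

theorem S_last (s : ℕ) : ∀ j, j < 2 ^ s → S (2 ^ s - 1) j = true := by
  induction s with
  | zero =>
    intro j hj
    have hj : j = 0 := by simpa using hj
    subst hj; simp [S_col_zero]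
  | succ s ih =>
    intro j hj
    rw [pow_succ] at hj ⊢
    rw [S_rec]
    have e1 : (2 ^ s * 2 - 1) / 2 = 2 ^ s - 1 := by omega
    have e2 : (2 ^ s * 2 - 1) % 2 = 1 := by omega
    rw [e1, e2, ih _ (by omega)]
    simp

theorem S_rot (s : ℕ) : ∀ i j, j ≤ i → i < 2 ^ s → S i j = S (2 ^ s - 1 - j) (i - j) := by
  induction s with
  | zero =>
    intro i j hj hi
    have hi : i = 0 := by simpa using hi
    subst hi
    have hj : j = 0 := by omega
    subst hj; rfl
  | succ s ih =>
    intro i j hj hi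
    rw [pow_succ] at hi ⊢
    rw [S_rec i j, S_rec (2 ^ s * 2 - 1 - j)]
    by_cases h : i % 2 = 0 ∧ j % 2 = 1
    · have h2 : (2 ^ s * 2 - 1 - j) % 2 = 0 ∧ (i - j) % 2 = 1 := by omega
      simp [h, h2]
    · have h2 : ¬ ((2 ^ s * 2 - 1 - j) % 2 = 0 ∧ (i - j) % 2 = 1) := by omega
      have e1 : (2 ^ s * 2 - 1 - j) / 2 = 2 ^ s - 1 - j / 2 := by omega
      have e2 : (i - j) / 2 = i / 2 - j / 2 := by omega
      rw [e1, e2, ih (i / 2) (j / 2) (by omega) (by omega), decide_eq_false h, decide_eq_false h2]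

/-- Positions. -/
abbrev Pos := {x : ℕ × ℕ // x.2 ≤ x.1}

open Classical in
/-- The pattern seen through the window `w` at `(i, j)`. -/
noncomputable def pat (w : ℕ → ℕ → Prop) (i j : ℕ) : ℕ × ℕ → Bool := fun q =>
  if w q.1 q.2 then S (i + q.1) (j + q.2) else false

theorem pat_eq_iff {w : ℕ → ℕ → Prop} {i j i' j' : ℕ} :
    pat w i j = pat w i' j' ↔ ∀ k m, w k m → S (i + k) (j + m) = S (i' + k) (j' + m) := by
  constructor
  · intro h k m hw
    have := congrFun h (k, m)
    simpa [pat, hw] using this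
  · intro h
    funext q
    unfold pat
    split
    · next hw => exact h _ _ hw
    · rfl

/-- Patterns through `w` at positions of the class given by `(ρ, γ)`. -/
def cls (w : ℕ → ℕ → Prop) (ρ γ : ℕ) : Set (ℕ × ℕ → Bool) :=
  Set.range (fun x : Pos => pat w (2 * x.1.1 + ρ) (2 * x.1.2 + γ))

/-- All patterns through `w`. -/
def rng (w : ℕ → ℕ → Prop) : Set (ℕ × ℕ → Bool) :=
  Set.range (fun x : Pos => pat w x.1.1 x.1.2)

theorem ncard_range_eq {α β γ : Type*} (f : α → β) (g : α → γ)
    (h : ∀ x y, f x = f y ↔ g x = g y) : (Set.range f).ncard = (Set.range g).ncard := by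
  apply Set.ncard_congr (fun b (hb : b ∈ Set.range f) => g hb.choose)
  · intro b hb
    exact ⟨_, rfl⟩
  · intro a b ha hb hab
    rw [← ha.choose_spec, ← hb.choose_spec]
    exact (h _ _).2 hab
  · rintro _ ⟨x, rfl⟩
    refine ⟨f x, ⟨x, rfl⟩, ?_⟩
    have hx : f x ∈ Set.range f := ⟨x, rfl⟩
    exact (h _ _).1 hx.choose_spec

theorem ncard_range_rel {α α' β γ : Type*} (f : α → β) (g : α' → γ) (R : α → α' → Prop)
    (h1 : ∀ x, ∃ y, R x y) (h2 : ∀ y, ∃ x, R x y)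
    (h : ∀ x y x' y', R x y → R x' y' → (f x = f x' ↔ g y = g y')) :
    (Set.range f).ncard = (Set.range g).ncard := by
  choose F hF using h1
  rw [ncard_range_eq f (g ∘ F) (fun x y => h _ _ _ _ (hF x) (hF y))]
  congr 1
  ext b
  constructor
  · rintro ⟨x, rfl⟩
    exact ⟨F x, rfl⟩
  · rintro ⟨y, rfl⟩
    obtain ⟨x, hx⟩ := h2 y
    exact ⟨x, ((h _ _ _ _ hx (hF x)).1 rfl).symm⟩

theorem rot_pos (N : ℕ) (x : Pos) : ∃ y : Pos, ∀ k m, m ≤ k → k < N →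
    S (x.1.1 + k) (x.1.2 + m) = S (y.1.1 + (N - 1 - m)) (y.1.2 + (k - m)) := by
  obtain ⟨⟨i, j⟩, hx⟩ := x
  have hx : j ≤ i := hx
  have hs : 2 * i + N < 2 ^ (2 * i + N) := Nat.lt_two_pow_self
  refine ⟨⟨(2 ^ (2 * i + N) - 1 - j - (N - 1), i - j), ?_⟩, ?_⟩
  · show i - j ≤ 2 ^ (2 * i + N) - 1 - j - (N - 1)
    omega
  · intro k m hm hk
    show S (i + k) (j + m) = S (2 ^ (2 * i + N) - 1 - j - (N - 1) + (N - 1 - m)) (i - j + (k - m))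
    rw [S_rot (2 * i + N) (i + k) (j + m) (by omega) (by omega)]
    congr 1 <;> omega

theorem rng_rot (N : ℕ) (w w' : ℕ → ℕ → Prop) (hw : ∀ k m, w k m → m ≤ k ∧ k < N)
    (hw' : ∀ k m, w' k m → m ≤ k ∧ k < N)
    (h1 : ∀ k m, w k m → w' (N - 1 - m) (k - m))
    (h2 : ∀ k m, w' k m → w (N - 1 - (k - m)) (N - 1 - k)) :
    (rng w).ncard = (rng w').ncard := by
  apply ncard_range_rel _ _ (fun x y : Pos => ∀ k m, m ≤ k → k < N →
    S (x.1.1 + k) (x.1.2 + m) = S (y.1.1 + (N - 1 - m)) (y.1.2 + (k - m)))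
  · exact rot_pos N
  · intro y
    obtain ⟨z, hz⟩ := rot_pos N y
    obtain ⟨x, hx⟩ := rot_pos N z
    refine ⟨x, fun k m hm hk => ?_⟩
    rw [hz (N - 1 - m) (k - m) (by omega) (by omega), hx _ _ (by omega) (by omega)]
    congr 1 <;> congr 1 <;> omega
  · intro x y x' y' hxy hxy'
    rw [pat_eq_iff, pat_eq_iff]
    constructor
    · intro h k m hk
      have hb := hw' k m hk
      have := h _ _ (h2 k m hk)
      rw [hxy _ _ (by omega) (by omega), hxy' _ _ (by omega) (by omega)] at this
      have e1 : N - 1 - (N - 1 - k) = k := by omega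
      have e2 : N - 1 - (k - m) - (N - 1 - k) = m := by omega
      rwa [e1, e2] at this
    · intro h k m hk
      have hb := hw k m hk
      rw [hxy _ _ hb.1 hb.2, hxy' _ _ hb.1 hb.2]
      exact h _ _ (h1 k m hk)

/-- Desubstitution: a class of patterns through `w` is in bijection with the patterns
through `v`. -/
theorem cls_ncard (w v : ℕ → ℕ → Prop) (ρ γ : ℕ)
    (h1 : ∀ k m, w k m → ((ρ + k) % 2 = 1 ∨ (γ + m) % 2 = 0) → v ((ρ + k) / 2) ((γ + m) / 2))
    (h2 : ∀ k m, v k m → ∃ k' m', w k' m' ∧ (ρ + k') / 2 = k ∧ (γ + m') / 2 = m ∧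
      ((ρ + k') % 2 = 1 ∨ (γ + m') % 2 = 0)) :
    (cls w ρ γ).ncard = (rng v).ncard := by
  apply ncard_range_eq
  intro x y
  rw [pat_eq_iff, pat_eq_iff]
  constructor
  · intro h k m hv
    obtain ⟨k', m', hw, rfl, rfl, hz⟩ := h2 k m hv
    have hz' : ¬ ((ρ + k') % 2 = 0 ∧ (γ + m') % 2 = 1) := by omega
    have := h k' m' hw
    rw [add_assoc, add_assoc, add_assoc, add_assoc, S_two_mul, S_two_mul,
      decide_eq_false hz'] at this
    simpa using this
  · intro h k m hw
    rw [add_assoc, add_assoc, add_assoc, add_assoc, S_two_mul, S_two_mul]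
    by_cases hz : (ρ + k) % 2 = 0 ∧ (γ + m) % 2 = 1
    · rw [decide_eq_true hz]; simp
    · rw [h _ _ (h1 k m hw (by omega))]

theorem mem_cls {w : ℕ → ℕ → Prop} {ρ γ : ℕ} (r j : ℕ) (h1 : ρ ≤ r) (h2 : γ ≤ j)
    (h3 : j - γ ≤ r - ρ) (h4 : r % 2 = ρ % 2) (h5 : j % 2 = γ % 2) : pat w r j ∈ cls w ρ γ := by
  refine ⟨⟨((r - ρ) / 2, (j - γ) / 2), ?_⟩, ?_⟩
  · show (j - γ) / 2 ≤ (r - ρ) / 2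
    omega
  · show pat w (2 * ((r - ρ) / 2) + ρ) (2 * ((j - γ) / 2) + γ) = pat w r j
    congr 1 <;> omega

theorem rng_eq_union (w : ℕ → ℕ → Prop) :
    rng w = cls w 0 0 ∪ cls w 1 0 ∪ cls w 1 1 ∪ cls w 2 1 := by
  ext p
  constructor
  · rintro ⟨⟨⟨r, j⟩, hx⟩, rfl⟩
    have hx : j ≤ r := hx
    show pat w r j ∈ _
    rcases Nat.mod_two_eq_zero_or_one r with h | h <;>
      rcases Nat.mod_two_eq_zero_or_one j with h' | h'
    · exact Or.inl (Or.inl (Or.inl (mem_cls r j (by omega) (by omega) (by omega) (by omega)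
        (by omega))))
    · exact Or.inr (mem_cls r j (by omega) (by omega) (by omega) (by omega) (by omega))
    · exact Or.inl (Or.inl (Or.inr (mem_cls r j (by omega) (by omega) (by omega) (by omega)
        (by omega))))
    · exact Or.inl (Or.inr (mem_cls r j (by omega) (by omega) (by omega) (by omega) (by omega)))
  · rintro (((⟨⟨⟨r, j⟩, hx⟩, rfl⟩ | ⟨⟨⟨r, j⟩, hx⟩, rfl⟩) | ⟨⟨⟨r, j⟩, hx⟩, rfl⟩) |
      ⟨⟨⟨r, j⟩, hx⟩, rfl⟩)
    · exact ⟨⟨(2 * r + 0, 2 * j + 0), by simp at hx ⊢; omega⟩, rfl⟩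
    · exact ⟨⟨(2 * r + 1, 2 * j + 0), by simp at hx ⊢; omega⟩, rfl⟩
    · exact ⟨⟨(2 * r + 1, 2 * j + 1), by simp at hx ⊢; omega⟩, rfl⟩
    · exact ⟨⟨(2 * r + 2, 2 * j + 1), by simp at hx ⊢; omega⟩, rfl⟩

theorem rng_finite (N : ℕ) (w : ℕ → ℕ → Prop) (hw : ∀ k m, w k m → m ≤ k ∧ k < N) :
    (rng w).Finite := by
  have : ((fun p : Fin N × Fin N → Bool => fun q : ℕ × ℕ =>
      if h : q.1 < N ∧ q.2 < N then p (⟨q.1, h.1⟩, ⟨q.2, h.2⟩) else false) '' Set.univ).Finite :=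
    Set.toFinite _
  apply this.subset
  rintro _ ⟨x, rfl⟩
  refine ⟨fun q => pat w x.1.1 x.1.2 (q.1, q.2), trivial, ?_⟩
  funext q
  by_cases h : q.1 < N ∧ q.2 < N
  · simp [h]
  · have hn : ¬ w q.1 q.2 := fun h' => h (by have := hw _ _ h'; omega)
    simp [h, pat, hn]

theorem cls_zero {w : ℕ → ℕ → Prop} {ρ γ : ℕ} {p : ℕ × ℕ → Bool} (hp : p ∈ cls w ρ γ)
    (k m : ℕ) (h1 : (ρ + k) % 2 = 0) (h2 : (γ + m) % 2 = 1) : p (k, m) = false := by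
  obtain ⟨x, rfl⟩ := hp
  simp only [pat]
  split
  · rw [add_assoc, add_assoc, S_two_mul, decide_eq_true ⟨h1, h2⟩]; simp
  · rfl

theorem cls_out {w : ℕ → ℕ → Prop} {ρ γ : ℕ} {p : ℕ × ℕ → Bool} (hp : p ∈ cls w ρ γ)
    (k m : ℕ) (h1 : ¬ w k m) : p (k, m) = false := by
  obtain ⟨x, rfl⟩ := hp
  simp only [pat, if_neg h1]

theorem cls_same {w : ℕ → ℕ → Prop} {ρ γ : ℕ} {p : ℕ × ℕ → Bool} (hp : p ∈ cls w ρ γ)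
    (k m k' m' : ℕ) (hw : w k m) (hw' : w k' m')
    (hk : (ρ + k) / 2 = (ρ + k') / 2) (hm : (γ + m) / 2 = (γ + m') / 2)
    (h1 : (ρ + k) % 2 = 1 ∨ (γ + m) % 2 = 0)
    (h2 : (ρ + k') % 2 = 1 ∨ (γ + m') % 2 = 0) : p (k, m) = p (k', m') := by
  obtain ⟨x, rfl⟩ := hp
  have h1' : ¬ ((ρ + k) % 2 = 0 ∧ (γ + m) % 2 = 1) := by omega
  have h2' : ¬ ((ρ + k') % 2 = 0 ∧ (γ + m') % 2 = 1) := by omega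
  simp only [pat, if_pos hw, if_pos hw']
  rw [add_assoc, add_assoc, add_assoc, add_assoc, S_two_mul, S_two_mul, decide_eq_false h1',
    decide_eq_false h2', hk, hm]

/-- The bottom-cut window. -/
def wbot (N k m : ℕ) : Prop := m ≤ k ∧ k < N ∧ ¬ (k + 1 = N ∧ (m = 0 ∨ m = k))
/-- The full window. -/
def wup (N k m : ℕ) : Prop := m ≤ k ∧ k < N
/-- The top-cut window. -/
def wtop (N k m : ℕ) : Prop := m ≤ k ∧ k < N ∧ 1 ≤ k
/-- The fully-cut window. -/
def wfull (N k m : ℕ) : Prop := m ≤ k ∧ k < N ∧ 1 ≤ k ∧ ¬ (k + 1 = N ∧ (m = 0 ∨ m = k))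
/-- The left-corner-cut window. -/
def wleft (N k m : ℕ) : Prop := m ≤ k ∧ k < N ∧ ¬ (k + 1 = N ∧ m = 0)
/-- The right-corner-cut window. -/
def wright (N k m : ℕ) : Prop := m ≤ k ∧ k < N ∧ ¬ (k + 1 = N ∧ m = k)

theorem left_ncard (N : ℕ) : (rng (wleft N)).ncard = (rng (wtop N)).ncard := by
  symm
  apply rng_rot N <;> intro k m <;> simp only [wleft, wtop] <;> omega

theorem right_ncard (N : ℕ) : (rng (wright N)).ncard = (rng (wtop N)).ncard := by
  rw [← left_ncard]
  symm
  apply rng_rot N <;> intro k m <;> simp only [wleft, wright] <;> omega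

/-- Variant of `cls_ncard` with an arithmetic second condition. -/
theorem cls_ncard' (w v : ℕ → ℕ → Prop) (ρ γ : ℕ)
    (h1 : ∀ k m, w k m → ((ρ + k) % 2 = 1 ∨ (γ + m) % 2 = 0) → v ((ρ + k) / 2) ((γ + m) / 2))
    (h2 : ∀ k m, v k m →
      (w (2 * k - ρ) (2 * m - γ) ∧ ρ ≤ 2 * k ∧ γ ≤ 2 * m) ∨
      (w (2 * k + 1 - ρ) (2 * m - γ) ∧ ρ ≤ 2 * k + 1 ∧ γ ≤ 2 * m) ∨
      (w (2 * k + 1 - ρ) (2 * m + 1 - γ) ∧ ρ ≤ 2 * k + 1 ∧ γ ≤ 2 * m + 1)) :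
    (cls w ρ γ).ncard = (rng v).ncard := by
  apply cls_ncard w v ρ γ h1
  intro k m hv
  rcases h2 k m hv with ⟨h, h3, h4⟩ | ⟨h, h3, h4⟩ | ⟨h, h3, h4⟩
  · exact ⟨_, _, h, by omega, by omega, by omega⟩
  · exact ⟨_, _, h, by omega, by omega, by omega⟩
  · exact ⟨_, _, h, by omega, by omega, by omega⟩

theorem even00 (n : ℕ) (hn : 2 ≤ n) : (cls (wbot (2 * n)) 0 0).ncard = (rng (wup n)).ncard := by
  apply cls_ncard' <;> intro k m <;> unfold wbot wup <;> omega
theorem even10 (n : ℕ) (hn : 2 ≤ n) :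
    (cls (wbot (2 * n)) 1 0).ncard = (rng (wbot (n + 1))).ncard := by
  apply cls_ncard' <;> intro k m <;> unfold wbot <;> omega
theorem even11 (n : ℕ) (hn : 2 ≤ n) :
    (cls (wbot (2 * n)) 1 1).ncard = (rng (wbot (n + 1))).ncard := by
  apply cls_ncard' <;> intro k m <;> unfold wbot <;> omega
theorem even21 (n : ℕ) (hn : 2 ≤ n) :
    (cls (wbot (2 * n)) 2 1).ncard = (rng (wfull (n + 1))).ncard := by
  apply cls_ncard' <;> intro k m <;> unfold wbot wfull <;> omega
theorem odd00 (n : ℕ) (hn : 2 ≤ n) :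
    (cls (wbot (2 * n + 1)) 0 0).ncard = (rng (wbot (n + 1))).ncard := by
  apply cls_ncard' <;> intro k m <;> unfold wbot <;> omega
theorem odd10 (n : ℕ) (hn : 2 ≤ n) :
    (cls (wbot (2 * n + 1)) 1 0).ncard = (rng (wtop (n + 1))).ncard := by
  rw [← right_ncard]
  apply cls_ncard' <;> intro k m <;> unfold wbot wright <;> omega
theorem odd11 (n : ℕ) (hn : 2 ≤ n) :
    (cls (wbot (2 * n + 1)) 1 1).ncard = (rng (wtop (n + 1))).ncard := by
  rw [← left_ncard]
  apply cls_ncard' <;> intro k m <;> unfold wbot wleft <;> omega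
theorem odd21 (n : ℕ) :
    (cls (wbot (2 * n + 1)) 2 1).ncard = (rng (wfull (n + 2))).ncard := by
  apply cls_ncard' <;> intro k m <;> unfold wbot wfull <;> omega

/-- Inclusion-exclusion for the particular overlap structure. -/
theorem count_union {α : Type*} {X Y Z W : Set α} (hX : X.Finite) (hY : Y.Finite) (hZ : Z.Finite)
    (hW : W.Finite) {z a b c : α} (hza : z ≠ a) (hzb : z ≠ b) (hzc : z ≠ c) (hbc : b ≠ c)
    (hXY : X ∩ Y = {z, a}) (hXZ : X ∩ Z = {z, b}) (hYZ : Y ∩ Z = {z, c})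
    (hXW : X ∩ W = {z}) (hYW : Y ∩ W = {z}) (hZW : Z ∩ W = {z}) :
    (X ∪ Y ∪ Z ∪ W).ncard + 6 = X.ncard + Y.ncard + Z.ncard + W.ncard := by
  have h1 := Set.ncard_union_add_ncard_inter X Y hX hY
  have h2 := Set.ncard_union_add_ncard_inter (X ∪ Y) Z (hX.union hY) hZ
  have h3 := Set.ncard_union_add_ncard_inter (X ∪ Y ∪ Z) W ((hX.union hY).union hZ) hW
  have e2 : (X ∪ Y) ∩ Z = {z, b, c} := by
    rw [Set.union_inter_distrib_right, hXZ, hYZ]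
    ext t; simp; tauto
  have e3 : (X ∪ Y ∪ Z) ∩ W = {z} := by
    rw [Set.union_inter_distrib_right, Set.union_inter_distrib_right, hXW, hYW, hZW]
    simp
  rw [hXY, Set.ncard_pair hza] at h1
  rw [e2, Set.ncard_eq_three.2 ⟨z, b, c, hzb, hzc, hbc, rfl⟩] at h2
  rw [e3, Set.ncard_singleton] at h3
  omega

/-- Blank pattern. -/
def blank : ℕ × ℕ → Bool := fun _ => false
/-- Apex pattern. -/
def ptop : ℕ × ℕ → Bool := fun q => decide (q.1 = 0 ∧ q.2 = 0)
/-- Lower left tip. -/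
def pleft (N : ℕ) : ℕ × ℕ → Bool :=
  fun q => decide ((q.1 + 2 = N ∧ q.2 = 0) ∨ (q.1 + 1 = N ∧ q.2 = 1))
/-- Lower right tip. -/
def pright (N : ℕ) : ℕ × ℕ → Bool :=
  fun q => decide ((q.1 + 2 = N ∨ q.1 + 1 = N) ∧ q.2 + 2 = N)

theorem inter_pair {w : ℕ → ℕ → Prop} {ρ γ ρ' γ' : ℕ} {t : ℕ × ℕ → Bool}
    (hb : blank ∈ cls w ρ γ) (hb' : blank ∈ cls w ρ' γ')
    (ht : t ∈ cls w ρ γ) (ht' : t ∈ cls w ρ' γ')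
    (h : ∀ p, p ∈ cls w ρ γ → p ∈ cls w ρ' γ' →
      (∀ k m, t (k, m) = false → p (k, m) = false) ∧
      (∀ k m k' m', t (k, m) = true → t (k', m') = true → p (k, m) = p (k', m'))) :
    cls w ρ γ ∩ cls w ρ' γ' = {blank, t} := by
  ext p
  constructor
  · rintro ⟨h1, h2⟩
    obtain ⟨h3, h4⟩ := h p h1 h2
    by_cases hq : ∃ k m, t (k, m) = true ∧ p (k, m) = true
    · obtain ⟨k, m, h5, h6⟩ := hq
      right
      funext ⟨k', m'⟩
      rcases h7 : t (k', m') with _ | _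
      · exact h3 _ _ h7
      · rw [← h4 k m k' m' h5 h7, h6]
    · left
      funext ⟨k, m⟩
      show p (k, m) = false
      rcases h7 : t (k, m) with _ | _
      · exact h3 _ _ h7
      · by_contra h8
        exact hq ⟨k, m, h7, by simpa using h8⟩
  · rintro (rfl | rfl)
    · exact ⟨hb, hb'⟩
    · exact ⟨ht, ht'⟩

theorem inter_single {w : ℕ → ℕ → Prop} {ρ γ ρ' γ' : ℕ}
    (hb : blank ∈ cls w ρ γ) (hb' : blank ∈ cls w ρ' γ')
    (h : ∀ p, p ∈ cls w ρ γ → p ∈ cls w ρ' γ' → ∀ k m, p (k, m) = false) :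
    cls w ρ γ ∩ cls w ρ' γ' = {blank} := by
  ext p
  constructor
  · rintro ⟨h1, h2⟩
    show p = blank
    funext ⟨k, m⟩
    exact h p h1 h2 k m
  · rintro rfl
    exact ⟨hb, hb'⟩

/-- Consequences of a filled cell: every visible cell of its block is also filled. -/
theorem cls_true {w : ℕ → ℕ → Prop} {ρ γ : ℕ} {p : ℕ × ℕ → Bool} (hp : p ∈ cls w ρ γ)
    (k m : ℕ) (h : p (k, m) = true) :
    w k m ∧ ((ρ + k) % 2 = 1 ∨ (γ + m) % 2 = 0) ∧
    ∀ k' m', w k' m' → (ρ + k) / 2 = (ρ + k') / 2 → (γ + m) / 2 = (γ + m') / 2 →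
      ((ρ + k') % 2 = 1 ∨ (γ + m') % 2 = 0) → p (k', m') = true := by
  have hw : w k m := by
    by_contra hw
    rw [cls_out hp k m hw] at h; cases h
  have hz : (ρ + k) % 2 = 1 ∨ (γ + m) % 2 = 0 := by
    by_contra hz
    rw [cls_zero hp k m (by omega) (by omega)] at h; cases h
  exact ⟨hw, hz, fun k' m' hw' hk hm hz' =>
    (cls_same hp k m k' m' hw hw' hk hm hz hz').symm.trans h⟩

/-- The arithmetic constraints on a filled cell of a pattern lying in two classes. -/
theorem both_true {w : ℕ → ℕ → Prop} {ρ γ ρ' γ' : ℕ} {p : ℕ × ℕ → Bool}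
    (hp : p ∈ cls w ρ γ) (hp' : p ∈ cls w ρ' γ') (k m : ℕ) (h : p (k, m) = true) :
    w k m ∧ ((ρ + k) % 2 = 1 ∨ (γ + m) % 2 = 0) ∧ ((ρ' + k) % 2 = 1 ∨ (γ' + m) % 2 = 0) ∧
    (∀ k' m', w k' m' → (ρ + k) / 2 = (ρ + k') / 2 → (γ + m) / 2 = (γ + m') / 2 →
      ((ρ + k') % 2 = 1 ∨ (γ + m') % 2 = 0) → ((ρ' + k') % 2 = 1 ∨ (γ' + m') % 2 = 0)) ∧
    (∀ k' m', w k' m' → (ρ' + k) / 2 = (ρ' + k') / 2 → (γ' + m) / 2 = (γ' + m') / 2 →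
      ((ρ' + k') % 2 = 1 ∨ (γ' + m') % 2 = 0) → ((ρ + k') % 2 = 1 ∨ (γ + m') % 2 = 0)) := by
  obtain ⟨a, b, c⟩ := cls_true hp k m h
  obtain ⟨a', b', c'⟩ := cls_true hp' k m h
  refine ⟨a, b, b', ?_, ?_⟩
  · intro k' m' h1 h2 h3 h4
    exact (cls_true hp' k' m' (c k' m' h1 h2 h3 h4)).2.1
  · intro k' m' h1 h2 h3 h4
    exact (cls_true hp k' m' (c' k' m' h1 h2 h3 h4)).2.1

/-- Constraints coming from the cells of the block of a filled cell. -/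
theorem buddy_facts {w : ℕ → ℕ → Prop} {ρ γ k m : ℕ} {z : ℕ → ℕ → Prop}
    (h : ∀ k' m', w k' m' → (ρ + k) / 2 = (ρ + k') / 2 → (γ + m) / 2 = (γ + m') / 2 →
      ((ρ + k') % 2 = 1 ∨ (γ + m') % 2 = 0) → z k' m') :
    ((ρ + k) % 2 = 0 → (γ + m) % 2 = 0 → w (k + 1) m → z (k + 1) m) ∧
    ((ρ + k) % 2 = 0 → (γ + m) % 2 = 0 → w (k + 1) (m + 1) → z (k + 1) (m + 1)) ∧
    ((ρ + k) % 2 = 1 → (γ + m) % 2 = 0 → w k (m + 1) → z k (m + 1)) ∧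
    ((ρ + k) % 2 = 1 → (γ + m) % 2 = 0 → 1 ≤ k → w (k - 1) m → z (k - 1) m) ∧
    ((ρ + k) % 2 = 1 → (γ + m) % 2 = 1 → 1 ≤ m → w k (m - 1) → z k (m - 1)) ∧
    ((ρ + k) % 2 = 1 → (γ + m) % 2 = 1 → 1 ≤ k → 1 ≤ m → w (k - 1) (m - 1) →
      z (k - 1) (m - 1)) := by
  refine ⟨?_, ?_, ?_, ?_, ?_, ?_⟩
  · intro a b c; exact h _ _ c (by omega) (by omega) (by omega)
  · intro a b c; exact h _ _ c (by omega) (by omega) (by omega)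
  · intro a b c; exact h _ _ c (by omega) (by omega) (by omega)
  · intro a b d c; exact h _ _ c (by omega) (by omega) (by omega)
  · intro a b d c; exact h _ _ c (by omega) (by omega) (by omega)
  · intro a b d e c; exact h _ _ c (by omega) (by omega) (by omega)

theorem core_even_00_10 (n : ℕ) (hn : 2 ≤ n) (p : ℕ × ℕ → Bool)
    (hp : p ∈ cls (wbot (2 * n)) 0 0) (hp' : p ∈ cls (wbot (2 * n)) 1 0)
    (k m : ℕ) (h : p (k, m) = true) : (k + 2 = 2 * n ∨ k + 1 = 2 * n) ∧ m + 2 = 2 * n := by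
  obtain ⟨h1, h2, h3, h4, h5⟩ := both_true hp hp' k m h
  clear hp hp' h
  rcases Nat.mod_two_eq_zero_or_one k with hk | hk <;>
    rcases Nat.mod_two_eq_zero_or_one m with hm | hm
  · have hkm := h1
    have qa2 : ¬ wbot (2 * n) (k + 1) (m + 1) := fun hw => by
      have := (buddy_facts h4).2.1 (by omega) (by omega) hw
      omega
    have qb3 : ¬ wbot (2 * n) k (m + 1) := fun hw => by
      have := (buddy_facts h5).2.2.1 (by omega) (by omega) hw
      omega
    clear h1 h2 h3 h4 h5
    unfold wbot at *
    omega
  · omega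
  · have hkm := h1
    have qa3 : ¬ wbot (2 * n) k (m + 1) := fun hw => by
      have := (buddy_facts h4).2.2.1 (by omega) (by omega) hw
      omega
    have qb2 : ¬ wbot (2 * n) (k + 1) (m + 1) := fun hw => by
      have := (buddy_facts h5).2.1 (by omega) (by omega) hw
      omega
    clear h1 h2 h3 h4 h5
    unfold wbot at *
    omega
  · omega

theorem core_even_00_11 (n : ℕ) (hn : 2 ≤ n) (p : ℕ × ℕ → Bool)
    (hp : p ∈ cls (wbot (2 * n)) 0 0) (hp' : p ∈ cls (wbot (2 * n)) 1 1)
    (k m : ℕ) (h : p (k, m) = true) : (k + 2 = 2 * n ∧ m = 0) ∨ (k + 1 = 2 * n ∧ m = 1) := by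
  obtain ⟨h1, h2, h3, h4, h5⟩ := both_true hp hp' k m h
  clear hp hp' h
  rcases Nat.mod_two_eq_zero_or_one k with hk | hk <;>
    rcases Nat.mod_two_eq_zero_or_one m with hm | hm
  · have hkm := h1
    have qa1 : ¬ wbot (2 * n) (k + 1) m := fun hw => by
      have := (buddy_facts h4).1 (by omega) (by omega) hw
      omega
    have qb5 : 1 ≤ m → ¬ wbot (2 * n) k (m - 1) := fun u0 hw => by
      have := (buddy_facts h5).2.2.2.2.1 (by omega) (by omega) u0 hw
      omega
    clear h1 h2 h3 h4 h5
    unfold wbot at *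
    omega
  · omega
  · omega
  · have hkm := h1
    have qa5 : 1 ≤ m → ¬ wbot (2 * n) k (m - 1) := fun u0 hw => by
      have := (buddy_facts h4).2.2.2.2.1 (by omega) (by omega) u0 hw
      omega
    have qb1 : ¬ wbot (2 * n) (k + 1) m := fun hw => by
      have := (buddy_facts h5).1 (by omega) (by omega) hw
      omega
    clear h1 h2 h3 h4 h5
    unfold wbot at *
    omega

theorem core_even_10_11 (n : ℕ) (hn : 2 ≤ n) (p : ℕ × ℕ → Bool)
    (hp : p ∈ cls (wbot (2 * n)) 1 0) (hp' : p ∈ cls (wbot (2 * n)) 1 1)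
    (k m : ℕ) (h : p (k, m) = true) : k = 0 ∧ m = 0 := by
  obtain ⟨h1, h2, h3, h4, h5⟩ := both_true hp hp' k m h
  clear hp hp' h
  rcases Nat.mod_two_eq_zero_or_one k with hk | hk <;>
    rcases Nat.mod_two_eq_zero_or_one m with hm | hm
  · have hkm := h1
    have qa4 : 1 ≤ k → ¬ wbot (2 * n) (k - 1) m := fun u0 hw => by
      have := (buddy_facts h4).2.2.2.1 (by omega) (by omega) u0 hw
      omega
    have qb6 : 1 ≤ k → 1 ≤ m → ¬ wbot (2 * n) (k - 1) (m - 1) := fun u0 u1 hw => by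
      have := (buddy_facts h5).2.2.2.2.2 (by omega) (by omega) u0 u1 hw
      omega
    clear h1 h2 h3 h4 h5
    unfold wbot at *
    omega
  · have hkm := h1
    have qa6 : 1 ≤ k → 1 ≤ m → ¬ wbot (2 * n) (k - 1) (m - 1) := fun u0 u1 hw => by
      have := (buddy_facts h4).2.2.2.2.2 (by omega) (by omega) u0 u1 hw
      omega
    have qb4 : 1 ≤ k → ¬ wbot (2 * n) (k - 1) m := fun u0 hw => by
      have := (buddy_facts h5).2.2.2.1 (by omega) (by omega) u0 hw
      omega
    clear h1 h2 h3 h4 h5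
    unfold wbot at *
    omega
  · omega
  · omega

theorem core_even_00_21 (n : ℕ) (hn : 2 ≤ n) (p : ℕ × ℕ → Bool)
    (hp : p ∈ cls (wbot (2 * n)) 0 0) (hp' : p ∈ cls (wbot (2 * n)) 2 1)
    (k m : ℕ) (h : p (k, m) = true) : False := by
  obtain ⟨h1, h2, h3, h4, h5⟩ := both_true hp hp' k m h
  clear hp hp' h
  rcases Nat.mod_two_eq_zero_or_one k with hk | hk <;>
    rcases Nat.mod_two_eq_zero_or_one m with hm | hm
  · omega
  · omega
  · have hkm := h1
    have qa4 : 1 ≤ k → ¬ wbot (2 * n) (k - 1) m := fun u0 hw => by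
      have := (buddy_facts h4).2.2.2.1 (by omega) (by omega) u0 hw
      omega
    have qb6 : 1 ≤ k → 1 ≤ m → ¬ wbot (2 * n) (k - 1) (m - 1) := fun u0 u1 hw => by
      have := (buddy_facts h5).2.2.2.2.2 (by omega) (by omega) u0 u1 hw
      omega
    clear h1 h2 h3 h4 h5
    unfold wbot at *
    omega
  · have hkm := h1
    have qa6 : 1 ≤ k → 1 ≤ m → ¬ wbot (2 * n) (k - 1) (m - 1) := fun u0 u1 hw => by
      have := (buddy_facts h4).2.2.2.2.2 (by omega) (by omega) u0 u1 hw
      omega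
    have qb4 : 1 ≤ k → ¬ wbot (2 * n) (k - 1) m := fun u0 hw => by
      have := (buddy_facts h5).2.2.2.1 (by omega) (by omega) u0 hw
      omega
    clear h1 h2 h3 h4 h5
    unfold wbot at *
    omega

theorem core_even_10_21 (n : ℕ) (hn : 2 ≤ n) (p : ℕ × ℕ → Bool)
    (hp : p ∈ cls (wbot (2 * n)) 1 0) (hp' : p ∈ cls (wbot (2 * n)) 2 1)
    (k m : ℕ) (h : p (k, m) = true) : False := by
  obtain ⟨h1, h2, h3, h4, h5⟩ := both_true hp hp' k m h
  clear hp hp' h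
  rcases Nat.mod_two_eq_zero_or_one k with hk | hk <;>
    rcases Nat.mod_two_eq_zero_or_one m with hm | hm
  · omega
  · have hkm := h1
    have qa5 : 1 ≤ m → ¬ wbot (2 * n) k (m - 1) := fun u0 hw => by
      have := (buddy_facts h4).2.2.2.2.1 (by omega) (by omega) u0 hw
      omega
    have qb1 : ¬ wbot (2 * n) (k + 1) m := fun hw => by
      have := (buddy_facts h5).1 (by omega) (by omega) hw
      omega
    clear h1 h2 h3 h4 h5
    unfold wbot at *
    omega
  · have hkm := h1
    have qa1 : ¬ wbot (2 * n) (k + 1) m := fun hw => by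
      have := (buddy_facts h4).1 (by omega) (by omega) hw
      omega
    have qb5 : 1 ≤ m → ¬ wbot (2 * n) k (m - 1) := fun u0 hw => by
      have := (buddy_facts h5).2.2.2.2.1 (by omega) (by omega) u0 hw
      omega
    clear h1 h2 h3 h4 h5
    unfold wbot at *
    omega
  · omega

theorem core_even_11_21 (n : ℕ) (hn : 2 ≤ n) (p : ℕ × ℕ → Bool)
    (hp : p ∈ cls (wbot (2 * n)) 1 1) (hp' : p ∈ cls (wbot (2 * n)) 2 1)
    (k m : ℕ) (h : p (k, m) = true) : False := by
  obtain ⟨h1, h2, h3, h4, h5⟩ := both_true hp hp' k m h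
  clear hp hp' h
  rcases Nat.mod_two_eq_zero_or_one k with hk | hk <;>
    rcases Nat.mod_two_eq_zero_or_one m with hm | hm
  · omega
  · have hkm := h1
    have qa3 : ¬ wbot (2 * n) k (m + 1) := fun hw => by
      have := (buddy_facts h4).2.2.1 (by omega) (by omega) hw
      omega
    have qb2 : ¬ wbot (2 * n) (k + 1) (m + 1) := fun hw => by
      have := (buddy_facts h5).2.1 (by omega) (by omega) hw
      omega
    clear h1 h2 h3 h4 h5
    unfold wbot at *
    omega
  · omega
  · have hkm := h1
    have qa2 : ¬ wbot (2 * n) (k + 1) (m + 1) := fun hw => by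
      have := (buddy_facts h4).2.1 (by omega) (by omega) hw
      omega
    have qb3 : ¬ wbot (2 * n) k (m + 1) := fun hw => by
      have := (buddy_facts h5).2.2.1 (by omega) (by omega) hw
      omega
    clear h1 h2 h3 h4 h5
    unfold wbot at *
    omega

theorem core_odd_21_10 (n : ℕ) (hn : 2 ≤ n) (p : ℕ × ℕ → Bool)
    (hp : p ∈ cls (wbot (2 * n + 1)) 2 1) (hp' : p ∈ cls (wbot (2 * n + 1)) 1 0)
    (k m : ℕ) (h : p (k, m) = true) : (k + 2 = 2 * n + 1 ∧ m = 0) ∨ (k + 1 = 2 * n + 1 ∧ m = 1) := by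
  obtain ⟨h1, h2, h3, h4, h5⟩ := both_true hp hp' k m h
  clear hp hp' h
  rcases Nat.mod_two_eq_zero_or_one k with hk | hk <;>
    rcases Nat.mod_two_eq_zero_or_one m with hm | hm
  · omega
  · have hkm := h1
    have qa1 : ¬ wbot (2 * n + 1) (k + 1) m := fun hw => by
      have := (buddy_facts h4).1 (by omega) (by omega) hw
      omega
    have qb5 : 1 ≤ m → ¬ wbot (2 * n + 1) k (m - 1) := fun u0 hw => by
      have := (buddy_facts h5).2.2.2.2.1 (by omega) (by omega) u0 hw
      omega
    clear h1 h2 h3 h4 h5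
    unfold wbot at *
    omega
  · have hkm := h1
    have qa5 : 1 ≤ m → ¬ wbot (2 * n + 1) k (m - 1) := fun u0 hw => by
      have := (buddy_facts h4).2.2.2.2.1 (by omega) (by omega) u0 hw
      omega
    have qb1 : ¬ wbot (2 * n + 1) (k + 1) m := fun hw => by
      have := (buddy_facts h5).1 (by omega) (by omega) hw
      omega
    clear h1 h2 h3 h4 h5
    unfold wbot at *
    omega
  · omega

theorem core_odd_21_11 (n : ℕ) (hn : 2 ≤ n) (p : ℕ × ℕ → Bool)
    (hp : p ∈ cls (wbot (2 * n + 1)) 2 1) (hp' : p ∈ cls (wbot (2 * n + 1)) 1 1)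
    (k m : ℕ) (h : p (k, m) = true) : (k + 2 = 2 * n + 1 ∨ k + 1 = 2 * n + 1) ∧ m + 2 = 2 * n + 1 := by
  obtain ⟨h1, h2, h3, h4, h5⟩ := both_true hp hp' k m h
  clear hp hp' h
  rcases Nat.mod_two_eq_zero_or_one k with hk | hk <;>
    rcases Nat.mod_two_eq_zero_or_one m with hm | hm
  · omega
  · have hkm := h1
    have qa2 : ¬ wbot (2 * n + 1) (k + 1) (m + 1) := fun hw => by
      have := (buddy_facts h4).2.1 (by omega) (by omega) hw
      omega
    have qb3 : ¬ wbot (2 * n + 1) k (m + 1) := fun hw => by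
      have := (buddy_facts h5).2.2.1 (by omega) (by omega) hw
      omega
    clear h1 h2 h3 h4 h5
    unfold wbot at *
    omega
  · omega
  · have hkm := h1
    have qa3 : ¬ wbot (2 * n + 1) k (m + 1) := fun hw => by
      have := (buddy_facts h4).2.2.1 (by omega) (by omega) hw
      omega
    have qb2 : ¬ wbot (2 * n + 1) (k + 1) (m + 1) := fun hw => by
      have := (buddy_facts h5).2.1 (by omega) (by omega) hw
      omega
    clear h1 h2 h3 h4 h5
    unfold wbot at *
    omega

theorem core_odd_10_11 (n : ℕ) (hn : 2 ≤ n) (p : ℕ × ℕ → Bool)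
    (hp : p ∈ cls (wbot (2 * n + 1)) 1 0) (hp' : p ∈ cls (wbot (2 * n + 1)) 1 1)
    (k m : ℕ) (h : p (k, m) = true) : k = 0 ∧ m = 0 := by
  obtain ⟨h1, h2, h3, h4, h5⟩ := both_true hp hp' k m h
  clear hp hp' h
  rcases Nat.mod_two_eq_zero_or_one k with hk | hk <;>
    rcases Nat.mod_two_eq_zero_or_one m with hm | hm
  · have hkm := h1
    have qa4 : 1 ≤ k → ¬ wbot (2 * n + 1) (k - 1) m := fun u0 hw => by
      have := (buddy_facts h4).2.2.2.1 (by omega) (by omega) u0 hw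
      omega
    have qb6 : 1 ≤ k → 1 ≤ m → ¬ wbot (2 * n + 1) (k - 1) (m - 1) := fun u0 u1 hw => by
      have := (buddy_facts h5).2.2.2.2.2 (by omega) (by omega) u0 u1 hw
      omega
    clear h1 h2 h3 h4 h5
    unfold wbot at *
    omega
  · have hkm := h1
    have qa6 : 1 ≤ k → 1 ≤ m → ¬ wbot (2 * n + 1) (k - 1) (m - 1) := fun u0 u1 hw => by
      have := (buddy_facts h4).2.2.2.2.2 (by omega) (by omega) u0 u1 hw
      omega
    have qb4 : 1 ≤ k → ¬ wbot (2 * n + 1) (k - 1) m := fun u0 hw => by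
      have := (buddy_facts h5).2.2.2.1 (by omega) (by omega) u0 hw
      omega
    clear h1 h2 h3 h4 h5
    unfold wbot at *
    omega
  · omega
  · omega

theorem core_odd_21_00 (n : ℕ) (hn : 2 ≤ n) (p : ℕ × ℕ → Bool)
    (hp : p ∈ cls (wbot (2 * n + 1)) 2 1) (hp' : p ∈ cls (wbot (2 * n + 1)) 0 0)
    (k m : ℕ) (h : p (k, m) = true) : False := by
  obtain ⟨h1, h2, h3, h4, h5⟩ := both_true hp hp' k m h
  clear hp hp' h
  rcases Nat.mod_two_eq_zero_or_one k with hk | hk <;>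
    rcases Nat.mod_two_eq_zero_or_one m with hm | hm
  · omega
  · omega
  · have hkm := h1
    have qa6 : 1 ≤ k → 1 ≤ m → ¬ wbot (2 * n + 1) (k - 1) (m - 1) := fun u0 u1 hw => by
      have := (buddy_facts h4).2.2.2.2.2 (by omega) (by omega) u0 u1 hw
      omega
    have qb4 : 1 ≤ k → ¬ wbot (2 * n + 1) (k - 1) m := fun u0 hw => by
      have := (buddy_facts h5).2.2.2.1 (by omega) (by omega) u0 hw
      omega
    clear h1 h2 h3 h4 h5
    unfold wbot at *
    omega
  · have hkm := h1
    have qa4 : 1 ≤ k → ¬ wbot (2 * n + 1) (k - 1) m := fun u0 hw => by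
      have := (buddy_facts h4).2.2.2.1 (by omega) (by omega) u0 hw
      omega
    have qb6 : 1 ≤ k → 1 ≤ m → ¬ wbot (2 * n + 1) (k - 1) (m - 1) := fun u0 u1 hw => by
      have := (buddy_facts h5).2.2.2.2.2 (by omega) (by omega) u0 u1 hw
      omega
    clear h1 h2 h3 h4 h5
    unfold wbot at *
    omega

theorem core_odd_10_00 (n : ℕ) (hn : 2 ≤ n) (p : ℕ × ℕ → Bool)
    (hp : p ∈ cls (wbot (2 * n + 1)) 1 0) (hp' : p ∈ cls (wbot (2 * n + 1)) 0 0)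
    (k m : ℕ) (h : p (k, m) = true) : False := by
  obtain ⟨h1, h2, h3, h4, h5⟩ := both_true hp hp' k m h
  clear hp hp' h
  rcases Nat.mod_two_eq_zero_or_one k with hk | hk <;>
    rcases Nat.mod_two_eq_zero_or_one m with hm | hm
  · have hkm := h1
    have qa3 : ¬ wbot (2 * n + 1) k (m + 1) := fun hw => by
      have := (buddy_facts h4).2.2.1 (by omega) (by omega) hw
      omega
    have qb2 : ¬ wbot (2 * n + 1) (k + 1) (m + 1) := fun hw => by
      have := (buddy_facts h5).2.1 (by omega) (by omega) hw
      omega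
    clear h1 h2 h3 h4 h5
    unfold wbot at *
    omega
  · omega
  · have hkm := h1
    have qa2 : ¬ wbot (2 * n + 1) (k + 1) (m + 1) := fun hw => by
      have := (buddy_facts h4).2.1 (by omega) (by omega) hw
      omega
    have qb3 : ¬ wbot (2 * n + 1) k (m + 1) := fun hw => by
      have := (buddy_facts h5).2.2.1 (by omega) (by omega) hw
      omega
    clear h1 h2 h3 h4 h5
    unfold wbot at *
    omega
  · omega

theorem core_odd_11_00 (n : ℕ) (hn : 2 ≤ n) (p : ℕ × ℕ → Bool)
    (hp : p ∈ cls (wbot (2 * n + 1)) 1 1) (hp' : p ∈ cls (wbot (2 * n + 1)) 0 0)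
    (k m : ℕ) (h : p (k, m) = true) : False := by
  obtain ⟨h1, h2, h3, h4, h5⟩ := both_true hp hp' k m h
  clear hp hp' h
  rcases Nat.mod_two_eq_zero_or_one k with hk | hk <;>
    rcases Nat.mod_two_eq_zero_or_one m with hm | hm
  · have hkm := h1
    have qa5 : 1 ≤ m → ¬ wbot (2 * n + 1) k (m - 1) := fun u0 hw => by
      have := (buddy_facts h4).2.2.2.2.1 (by omega) (by omega) u0 hw
      omega
    have qb1 : ¬ wbot (2 * n + 1) (k + 1) m := fun hw => by
      have := (buddy_facts h5).1 (by omega) (by omega) hw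
      omega
    clear h1 h2 h3 h4 h5
    unfold wbot at *
    omega
  · omega
  · omega
  · have hkm := h1
    have qa1 : ¬ wbot (2 * n + 1) (k + 1) m := fun hw => by
      have := (buddy_facts h4).1 (by omega) (by omega) hw
      omega
    have qb5 : 1 ≤ m → ¬ wbot (2 * n + 1) k (m - 1) := fun u0 hw => by
      have := (buddy_facts h5).2.2.2.2.1 (by omega) (by omega) u0 hw
      omega
    clear h1 h2 h3 h4 h5
    unfold wbot at *
    omega

theorem blank_mem {N : ℕ} (ρ γ : ℕ) (hρ : ρ ≤ 2) (hγ : γ ≤ 1) :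
    blank ∈ cls (wbot N) ρ γ := by
  obtain ⟨t, ht, hs⟩ : ∃ t, 2 ^ (4 * N + 9) = 2 * t ∧ 4 * N + 8 < t :=
    ⟨2 ^ (4 * N + 8), by ring, Nat.lt_two_pow_self⟩
  have : (blank : ℕ × ℕ → Bool) =
      pat (wbot N) (2 ^ (4 * N + 9) + ρ) (2 * N + 4 + γ) := by
    funext ⟨k, m⟩
    simp only [pat, blank]
    split
    · next hw =>
      obtain ⟨h1, h2, -⟩ := hw
      have := S_block (4 * N + 9) 1 0 (ρ + k) (2 * N + 4 + γ + m) (by omega) (by omega)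
      rw [S_zero (i := ρ + k) (by omega), Bool.and_false] at this
      rw [← this]
      congr 1 <;> omega
    · rfl
  rw [this]
  apply mem_cls <;> omega

theorem top_mem {N : ℕ} (hN : 2 ≤ N) (γ : ℕ) (hγ : γ ≤ 1) : ptop ∈ cls (wbot N) 1 γ := by
  obtain ⟨t, ht, hs⟩ : ∃ t, 2 ^ (4 * N + 9) = 2 * t ∧ 4 * N + 8 < t :=
    ⟨2 ^ (4 * N + 8), by ring, Nat.lt_two_pow_self⟩
  have : ptop = pat (wbot N) (2 ^ (4 * N + 9) - 1) (2 * N + 4 + γ) := by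
    funext ⟨k, m⟩
    simp only [pat, ptop]
    split
    · next hw =>
      obtain ⟨h1, h2, -⟩ := hw
      by_cases hk : k = 0
      · have hm : m = 0 := by omega
        subst hk; subst hm
        rw [Nat.add_zero, S_last _ _ (by omega)]; simp
      · have := S_block (4 * N + 9) 1 0 (k - 1) (2 * N + 4 + γ + m) (by omega) (by omega)
        rw [S_zero (i := k - 1) (by omega), Bool.and_false] at this
        have e : 2 ^ (4 * N + 9) - 1 + k = 2 ^ (4 * N + 9) * 1 + (k - 1) := by omega
        rw [e]
        simp only [Nat.mul_zero, Nat.zero_add] at this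
        rw [this]; simp [hk]
    · next hw =>
      apply decide_eq_false
      unfold wbot at hw
      omega
  rw [this]
  apply mem_cls <;> omega

theorem right_pat (N e : ℕ) (hN : 4 ≤ N) (he : e ≤ 1) :
    pat (wbot N) (3 * 2 ^ (4 * N + 9) + e + 2 - N) (2 * 2 ^ (4 * N + 9) + 2 - N) = pright N := by
  have hs : 4 * N + 9 < 2 ^ (4 * N + 9) := Nat.lt_two_pow_self
  have hB := S_block (4 * N + 9)
  generalize 2 ^ (4 * N + 9) = t at *
  funext ⟨k, m⟩
  simp only [pat, pright]
  split
  · next hw =>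
    obtain ⟨h1, h2, h3⟩ := hw
    by_cases hk : N ≤ e + 2 + k
    · by_cases hm : m + 2 = N
      · have := hB 3 2 (e + 2 + k - N) 0 (by omega) (by omega)
        rw [S_col_zero] at this
        have e1 : 3 * t + e + 2 - N + k = t * 3 + (e + 2 + k - N) := by omega
        have e2 : 2 * t + 2 - N + m = t * 2 + 0 := by omega
        rw [e1, e2, this, decide_eq_true (by omega)]
        decide
      · have := hB 3 1 (e + 2 + k - N) (t + 2 - N + m) (by omega) (by omega)
        rw [S_zero (i := e + 2 + k - N) (by omega), Bool.and_false] at this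
        have e1 : 3 * t + e + 2 - N + k = t * 3 + (e + 2 + k - N) := by omega
        have e2 : 2 * t + 2 - N + m = t * 1 + (t + 2 - N + m) := by omega
        rw [e1, e2, this, decide_eq_false (by omega)]
    · have := hB 2 1 (t + e + 2 + k - N) (t + 2 - N + m) (by omega) (by omega)
      have h21 : S 2 1 = false := by decide
      rw [h21, Bool.false_and] at this
      have e1 : 3 * t + e + 2 - N + k = t * 2 + (t + e + 2 + k - N) := by omega
      have e2 : 2 * t + 2 - N + m = t * 1 + (t + 2 - N + m) := by omega
      rw [e1, e2, this, decide_eq_false (by omega)]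
  · next hw =>
    symm
    apply decide_eq_false
    unfold wbot at hw
    omega

theorem left_pat (N e : ℕ) (hN : 4 ≤ N) (he : e ≤ 1) :
    pat (wbot N) (3 * 2 ^ (4 * N + 9) + e + 2 - N) (2 ^ (4 * N + 9) + e) = pleft N := by
  have hs : 4 * N + 9 < 2 ^ (4 * N + 9) := Nat.lt_two_pow_self
  have hR := right_pat N e hN he
  generalize 2 ^ (4 * N + 9) = t at *
  funext ⟨k, m⟩
  by_cases hw : wbot N k m
  · have h := congrFun hR (k, k - m)
    have hw' : wbot N k (k - m) := by unfold wbot at *; omega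
    simp only [pat, if_pos hw, if_pos hw'] at h ⊢
    obtain ⟨h1, h2, h3⟩ := hw
    rw [← S_symm (by omega)]
    have e1 : 3 * t + e + 2 - N + k - (t + e + m) = 2 * t + 2 - N + (k - m) := by omega
    rw [e1, h]
    simp only [pright, pleft]
    apply decide_eq_decide.2
    omega
  · simp only [pat, if_neg hw, pleft]
    symm
    apply decide_eq_false
    unfold wbot at hw
    omega

theorem right_mem (N e ρ γ : ℕ) (hN : 4 ≤ N) (he : e ≤ 1) (hρ : ρ ≤ 2) (hγ : γ ≤ 1)
    (h1 : (e + N) % 2 = ρ % 2) (h2 : N % 2 = γ % 2) : pright N ∈ cls (wbot N) ρ γ := by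
  obtain ⟨t, ht, hs⟩ : ∃ t, 2 ^ (4 * N + 9) = 2 * t ∧ 4 * N + 8 < t :=
    ⟨2 ^ (4 * N + 8), by ring, Nat.lt_two_pow_self⟩
  rw [← right_pat N e hN he]
  apply mem_cls <;> omega

theorem left_mem (N e ρ γ : ℕ) (hN : 4 ≤ N) (he : e ≤ 1) (hρ : ρ ≤ 2) (hγ : γ ≤ 1)
    (h1 : (e + N) % 2 = ρ % 2) (h2 : e % 2 = γ % 2) : pleft N ∈ cls (wbot N) ρ γ := by
  obtain ⟨t, ht, hs⟩ : ∃ t, 2 ^ (4 * N + 9) = 2 * t ∧ 4 * N + 8 < t :=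
    ⟨2 ^ (4 * N + 8), by ring, Nat.lt_two_pow_self⟩
  rw [← left_pat N e hN he]
  apply mem_cls <;> omega

theorem ne_bt : blank ≠ ptop := fun h => by simpa [blank, ptop] using congrFun h (0, 0)
theorem ne_bl {N : ℕ} (hN : 4 ≤ N) : blank ≠ pleft N := fun h => by
  have := congrFun h (N - 2, 0)
  have e : N - 2 + 2 = N := by omega
  simp [blank, pleft, e] at this
theorem ne_br {N : ℕ} (hN : 4 ≤ N) : blank ≠ pright N := fun h => by
  have := congrFun h (N - 2, N - 2)
  have e : N - 2 + 2 = N := by omega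
  simp [blank, pright, e] at this
theorem ne_lt {N : ℕ} (hN : 4 ≤ N) : pleft N ≠ ptop := fun h => by
  have := congrFun h (0, 0)
  have e : 2 ≠ N := by omega
  simp [ptop, pleft, e] at this
theorem ne_rt {N : ℕ} (hN : 4 ≤ N) : pright N ≠ ptop := fun h => by
  have := congrFun h (0, 0)
  have e : 2 ≠ N := by omega
  simp [ptop, pright, e] at this

theorem inter_single' {w : ℕ → ℕ → Prop} {ρ γ ρ' γ' : ℕ}
    (hb : blank ∈ cls w ρ γ) (hb' : blank ∈ cls w ρ' γ')
    (h : ∀ p, p ∈ cls w ρ γ → p ∈ cls w ρ' γ' → ∀ k m, p (k, m) = true → False) :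
    cls w ρ γ ∩ cls w ρ' γ' = {blank} :=
  inter_single hb hb' fun p h1 h2 k m => by
    by_contra h3
    exact h p h1 h2 k m (by simpa using h3)

theorem inter_top {N : ℕ} (hN : 2 ≤ N)
    (h : ∀ p, p ∈ cls (wbot N) 1 0 → p ∈ cls (wbot N) 1 1 → ∀ k m, p (k, m) = true →
      k = 0 ∧ m = 0) :
    cls (wbot N) 1 0 ∩ cls (wbot N) 1 1 = {blank, ptop} := by
  apply inter_pair (blank_mem _ _ (by omega) (by omega)) (blank_mem _ _ (by omega) (by omega))
    (top_mem hN _ (by omega)) (top_mem hN _ (by omega))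
  intro p h1 h2
  constructor
  · intro k m ht
    by_contra h3
    have := h p h1 h2 k m (by simpa using h3)
    simp [ptop] at ht
    omega
  · intro k m k' m' ht ht'
    simp [ptop] at ht ht'
    rw [ht.1, ht.2, ht'.1, ht'.2]

theorem inter_right {N ρ γ ρ' γ' : ℕ} (hb : blank ∈ cls (wbot N) ρ γ)
    (hb' : blank ∈ cls (wbot N) ρ' γ') (ht : pright N ∈ cls (wbot N) ρ γ)
    (ht' : pright N ∈ cls (wbot N) ρ' γ')
    (h : ∀ p, p ∈ cls (wbot N) ρ γ → p ∈ cls (wbot N) ρ' γ' → ∀ k m, p (k, m) = true →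
      (k + 2 = N ∨ k + 1 = N) ∧ m + 2 = N)
    (hs : ∀ p, p ∈ cls (wbot N) ρ γ → p ∈ cls (wbot N) ρ' γ' →
      p (N - 2, N - 2) = p (N - 1, N - 2)) :
    cls (wbot N) ρ γ ∩ cls (wbot N) ρ' γ' = {blank, pright N} := by
  apply inter_pair hb hb' ht ht'
  intro p h1 h2
  constructor
  · intro k m ht
    by_contra h3
    have := h p h1 h2 k m (by simpa using h3)
    simp [pright] at ht
    omega
  · have key : ∀ k m, pright N (k, m) = true → p (k, m) = p (N - 2, N - 2) := by
      intro k m hk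
      simp [pright] at hk
      obtain ⟨hk | hk, hm⟩ := hk
      · congr 2 <;> omega
      · rw [hs p h1 h2]
        congr 2 <;> omega
    intro k m k' m' ht ht'
    rw [key k m ht, key k' m' ht']

theorem inter_left {N ρ γ ρ' γ' : ℕ} (hb : blank ∈ cls (wbot N) ρ γ)
    (hb' : blank ∈ cls (wbot N) ρ' γ') (ht : pleft N ∈ cls (wbot N) ρ γ)
    (ht' : pleft N ∈ cls (wbot N) ρ' γ')
    (h : ∀ p, p ∈ cls (wbot N) ρ γ → p ∈ cls (wbot N) ρ' γ' → ∀ k m, p (k, m) = true →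
      (k + 2 = N ∧ m = 0) ∨ (k + 1 = N ∧ m = 1))
    (hs : ∀ p, p ∈ cls (wbot N) ρ γ → p ∈ cls (wbot N) ρ' γ' → p (N - 2, 0) = p (N - 1, 1)) :
    cls (wbot N) ρ γ ∩ cls (wbot N) ρ' γ' = {blank, pleft N} := by
  apply inter_pair hb hb' ht ht'
  intro p h1 h2
  constructor
  · intro k m ht
    by_contra h3
    have := h p h1 h2 k m (by simpa using h3)
    simp [pleft] at ht
    omega
  · have key : ∀ k m, pleft N (k, m) = true → p (k, m) = p (N - 2, 0) := by
      intro k m hk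
      simp [pleft] at hk
      rcases hk with ⟨hk, hm⟩ | ⟨hk, hm⟩
      · congr 2; omega
      · rw [hs p h1 h2]
        congr 2; omega
    intro k m k' m' ht ht'
    rw [key k m ht, key k' m' ht']

theorem cls_finite (N ρ γ : ℕ) (h : cls (wbot N) ρ γ ⊆ rng (wbot N)) :
    (cls (wbot N) ρ γ).Finite :=
  (rng_finite N (wbot N) (fun _ _ h => ⟨h.1, h.2.1⟩)).subset h

theorem even_main (n : ℕ) (hn : 2 ≤ n) :
    (rng (wbot (2 * n))).ncard + 6 =
      (rng (wup n)).ncard + 2 * (rng (wbot (n + 1))).ncard + (rng (wfull (n + 1))).ncard := by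
  have hU := rng_eq_union (wbot (2 * n))
  have hb : ∀ ρ γ, ρ ≤ 2 → γ ≤ 1 → blank ∈ cls (wbot (2 * n)) ρ γ := blank_mem
  have h := count_union (X := cls (wbot (2 * n)) 0 0) (Y := cls (wbot (2 * n)) 1 0)
    (Z := cls (wbot (2 * n)) 1 1) (W := cls (wbot (2 * n)) 2 1)
    (z := blank) (a := pright (2 * n)) (b := pleft (2 * n)) (c := ptop)
    (cls_finite _ _ _ (by rw [hU]; intro x hx; simp [hx]))
    (cls_finite _ _ _ (by rw [hU]; intro x hx; simp [hx]))
    (cls_finite _ _ _ (by rw [hU]; intro x hx; simp [hx]))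
    (cls_finite _ _ _ (by rw [hU]; intro x hx; simp [hx]))
    (ne_br (by omega)) (ne_bl (by omega)) ne_bt (ne_lt (by omega))
    (inter_right (hb _ _ (by omega) (by omega)) (hb _ _ (by omega) (by omega))
      (right_mem _ 0 _ _ (by omega) (by omega) (by omega) (by omega) (by omega) (by omega))
      (right_mem _ 1 _ _ (by omega) (by omega) (by omega) (by omega) (by omega) (by omega))
      (core_even_00_10 n hn)
      (fun p hp _ => cls_same hp _ _ _ _ (by unfold wbot; omega) (by unfold wbot; omega)
        (by omega) (by omega) (by omega) (by omega)))
    (inter_left (hb _ _ (by omega) (by omega)) (hb _ _ (by omega) (by omega))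
      (left_mem _ 0 _ _ (by omega) (by omega) (by omega) (by omega) (by omega) (by omega))
      (left_mem _ 1 _ _ (by omega) (by omega) (by omega) (by omega) (by omega) (by omega))
      (core_even_00_11 n hn)
      (fun p hp _ => cls_same hp _ _ _ _ (by unfold wbot; omega) (by unfold wbot; omega)
        (by omega) (by omega) (by omega) (by omega)))
    (inter_top (by omega) (core_even_10_11 n hn))
    (inter_single' (hb _ _ (by omega) (by omega)) (hb _ _ (by omega) (by omega))
      (core_even_00_21 n hn))
    (inter_single' (hb _ _ (by omega) (by omega)) (hb _ _ (by omega) (by omega))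
      (core_even_10_21 n hn))
    (inter_single' (hb _ _ (by omega) (by omega)) (hb _ _ (by omega) (by omega))
      (core_even_11_21 n hn))
  rw [← hU, even00 n hn, even10 n hn, even11 n hn, even21 n hn] at h
  omega

theorem odd_main (n : ℕ) (hn : 2 ≤ n) :
    (rng (wbot (2 * n + 1))).ncard + 6 =
      (rng (wbot (n + 1))).ncard + 2 * (rng (wtop (n + 1))).ncard +
        (rng (wfull (n + 2))).ncard := by
  have hU := rng_eq_union (wbot (2 * n + 1))
  have hb : ∀ ρ γ, ρ ≤ 2 → γ ≤ 1 → blank ∈ cls (wbot (2 * n + 1)) ρ γ := blank_mem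
  have h := count_union (X := cls (wbot (2 * n + 1)) 2 1) (Y := cls (wbot (2 * n + 1)) 1 0)
    (Z := cls (wbot (2 * n + 1)) 1 1) (W := cls (wbot (2 * n + 1)) 0 0)
    (z := blank) (a := pleft (2 * n + 1)) (b := pright (2 * n + 1)) (c := ptop)
    (cls_finite _ _ _ (by rw [hU]; intro x hx; simp [hx]))
    (cls_finite _ _ _ (by rw [hU]; intro x hx; simp [hx]))
    (cls_finite _ _ _ (by rw [hU]; intro x hx; simp [hx]))
    (cls_finite _ _ _ (by rw [hU]; intro x hx; simp [hx]))
    (ne_bl (by omega)) (ne_br (by omega)) ne_bt (ne_rt (by omega))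
    (inter_left (hb _ _ (by omega) (by omega)) (hb _ _ (by omega) (by omega))
      (left_mem _ 1 _ _ (by omega) (by omega) (by omega) (by omega) (by omega) (by omega))
      (left_mem _ 0 _ _ (by omega) (by omega) (by omega) (by omega) (by omega) (by omega))
      (core_odd_21_10 n hn)
      (fun p _ hp => cls_same hp _ _ _ _ (by unfold wbot; omega) (by unfold wbot; omega)
        (by omega) (by omega) (by omega) (by omega)))
    (inter_right (hb _ _ (by omega) (by omega)) (hb _ _ (by omega) (by omega))
      (right_mem _ 1 _ _ (by omega) (by omega) (by omega) (by omega) (by omega) (by omega))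
      (right_mem _ 0 _ _ (by omega) (by omega) (by omega) (by omega) (by omega) (by omega))
      (core_odd_21_11 n hn)
      (fun p _ hp => cls_same hp _ _ _ _ (by unfold wbot; omega) (by unfold wbot; omega)
        (by omega) (by omega) (by omega) (by omega)))
    (inter_top (by omega) (core_odd_10_11 n hn))
    (inter_single' (hb _ _ (by omega) (by omega)) (hb _ _ (by omega) (by omega))
      (core_odd_21_00 n hn))
    (inter_single' (hb _ _ (by omega) (by omega)) (hb _ _ (by omega) (by omega))
      (core_odd_10_00 n hn))
    (inter_single' (hb _ _ (by omega) (by omega)) (hb _ _ (by omega) (by omega))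
      (core_odd_11_00 n hn))
  have hU' : cls (wbot (2 * n + 1)) 2 1 ∪ cls (wbot (2 * n + 1)) 1 0 ∪
      cls (wbot (2 * n + 1)) 1 1 ∪ cls (wbot (2 * n + 1)) 0 0 = rng (wbot (2 * n + 1)) := by
    rw [hU]
    ext x
    simp only [Set.mem_union]
    tauto
  rw [hU', odd00 n hn, odd10 n hn, odd11 n hn, odd21 n] at h
  omega

theorem filled_even (r c m : ℕ) (hc : c % 2 = 0) :
    filled r (c + 2 * m) = S r (c / 2 + m) := by
  have e1 : (c + 2 * m) % 2 = 0 := by omega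
  have e2 : (c + 2 * m) / 2 = c / 2 + m := by omega
  simp [filled, S, e1, e2]

theorem filled_odd (r c : ℕ) (hc : c % 2 = 1) : filled r c = false := by
  simp [filled, hc]

theorem conv (Q : ℕ × ℕ → Prop) [DecidablePred Q] (w : ℕ → ℕ → Prop)
    (hQ : ∀ k m, Q (k, 2 * m) ↔ w k m) :
    Set.ncard { p : ℕ × ℕ → Bool | ∃ r c : ℕ, c % 2 = 0 ∧ c ≤ 2 * r ∧
      p = fun q => if Q q then filled (r + q.1) (c + q.2) else false } = (rng w).ncard := by
  have e : { p : ℕ × ℕ → Bool | ∃ r c : ℕ, c % 2 = 0 ∧ c ≤ 2 * r ∧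
      p = fun q => if Q q then filled (r + q.1) (c + q.2) else false } =
      Set.range (fun (x : Pos) (q : ℕ × ℕ) =>
        if Q q then filled (x.1.1 + q.1) (2 * x.1.2 + q.2) else false) := by
    ext p
    constructor
    · rintro ⟨r, c, h1, h2, rfl⟩
      refine ⟨⟨(r, c / 2), by show c / 2 ≤ r; omega⟩, ?_⟩
      have : 2 * (c / 2) = c := by omega
      simp only [this]
    · rintro ⟨⟨⟨r, j⟩, hx⟩, rfl⟩
      have hx : j ≤ r := hx
      exact ⟨r, 2 * j, by omega, by omega, rfl⟩
  rw [e]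
  apply ncard_range_eq
  intro x y
  rw [pat_eq_iff]
  constructor
  · intro h k m hw
    have := congrFun h (k, 2 * m)
    simp only [if_pos ((hQ k m).2 hw)] at this
    rw [filled_even _ _ _ (by omega), filled_even _ _ _ (by omega)] at this
    simpa using this
  · intro h
    funext ⟨k, m⟩
    by_cases hq : Q (k, m)
    · simp only [if_pos hq]
      rcases Nat.mod_two_eq_zero_or_one m with hm | hm
      · obtain ⟨m', rfl⟩ : ∃ m', m = 2 * m' := ⟨m / 2, by omega⟩
        rw [filled_even _ _ _ (by omega), filled_even _ _ _ (by omega)]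
        simpa using h k m' ((hQ k m').1 hq)
      · rw [filled_odd _ _ (by omega), filled_odd _ _ (by omega)]
    · simp only [if_neg hq]

theorem Pup_ncard (N : ℕ) : (Pup N).ncard = (rng (wup N)).ncard :=
  conv (fun q => q.1 < N ∧ q.2 ≤ 2 * q.1) _ (by intro k m; simp only [wup]; omega)

theorem PtopCut_ncard (N : ℕ) : (PtopCut N).ncard = (rng (wtop N)).ncard :=
  conv (fun q => 1 ≤ q.1 ∧ q.1 < N ∧ q.2 ≤ 2 * q.1) _ (by intro k m; simp only [wtop]; omega)

theorem PbotCut_ncard (N : ℕ) (hN : 2 ≤ N) : (PbotCut N).ncard = (rng (wbot N)).ncard :=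
  conv (fun q => (q.1 < N ∧ q.2 ≤ 2 * q.1) ∧ ¬(q.1 = N - 1 ∧ (q.2 = 0 ∨ q.2 = 2 * (N - 1)))) _
    (by intro k m; simp only [wbot]; omega)

theorem PfullyCut_ncard (N : ℕ) (hN : 2 ≤ N) : (PfullyCut N).ncard = (rng (wfull N)).ncard :=
  conv (fun q => (q.1 < N ∧ q.2 ≤ 2 * q.1) ∧ q ≠ (0, 0) ∧
    ¬(q.1 = N - 1 ∧ (q.2 = 0 ∨ q.2 = 2 * (N - 1)))) _
    (by intro k m; simp only [wfull, ne_eq, Prod.mk.injEq]; omega)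

end SierpC

theorem sierpinski_recursion_C (n : ℕ) (hn : 2 ≤ n) :
    (PbotCut (2 * n)).ncard + 6 =
      (Pup n).ncard + 2 * (PbotCut (n + 1)).ncard + (PfullyCut (n + 1)).ncard ∧
    (PbotCut (2 * n + 1)).ncard + 6 =
      (PbotCut (n + 1)).ncard + 2 * (PtopCut (n + 1)).ncard + (PfullyCut (n + 2)).ncard := by
  rw [SierpC.PbotCut_ncard _ (by omega), SierpC.PbotCut_ncard _ (by omega),
    SierpC.PbotCut_ncard _ (by omega), SierpC.Pup_ncard, SierpC.PtopCut_ncard,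
    SierpC.PfullyCut_ncard _ (by omega), SierpC.PfullyCut_ncard _ (by omega)]
  exact ⟨SierpC.even_main n hn, SierpC.odd_main n hn⟩
end
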